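/- arXiv:1012.3851 — 9 statements merged into one kernel-verified Lean document; each statement's English description precedes it below -/
import Mathlib

section
/- Let U ⊆ ℝ^m be a non-empty open convex set and let f, g : U → ℝ. Assume g is twice differentiable on U and its Hessian is uniformly positive definite: there is a constant 0 < K < ∞ such that yᵀ (∂²g/∂x∂xᵀ)(x) y ≥ K‖y‖² for all x ∈ U and all y ∈ ℝ^m. If u ∈ U minimizes f over U and v ∈ U minimizes g over U, then ‖u − v‖ ≤ 2 K^{−1/2} √(sup_{x∈U} |f(x) − g(x)|). -/
open scoped ENNReal

/-!
A lower bound `K` on the Hessian makes `g` strongly convex: along a segment from `x` to `y` its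
second derivative is at least `K ‖y - x‖²`. A strongly convex function grows at least like
`K / 2 * ‖x - v‖²` away from its minimizer `v`, while `f u ≤ f v` gives
`g u - g v ≤ |f u - g u| + |f v - g v|`, which is at most twice the uniform distance of `f` and `g`.
-/

open Set Filter Topology

section SecondDerivative

theorem strongConvexOn_of_hasDerivWithinAt2_ge {D : Set ℝ} (hD : Convex ℝ D) {f f' f'' : ℝ → ℝ}
    {c : ℝ} (hf : ContinuousOn f D)
    (hf' : ∀ t ∈ interior D, HasDerivWithinAt f (f' t) (interior D) t)
    (hf'' : ∀ t ∈ interior D, HasDerivWithinAt f' (f'' t) (interior D) t)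
    (hc : ∀ t ∈ interior D, c ≤ f'' t) : StrongConvexOn D c f := by
  have hquad (t : ℝ) : HasDerivAt (fun t ↦ c / 2 * t ^ 2) (c * t) t :=
    ((hasDerivAt_pow 2 t).const_mul (c / 2)).congr_deriv (by push_cast; ring)
  simp only [strongConvexOn_iff_convex, Real.norm_eq_abs, sq_abs]
  refine convexOn_of_hasDerivWithinAt2_nonneg (f' := fun t ↦ f' t - c * t)
    (f'' := fun t ↦ f'' t - c) hD (hf.sub (by fun_prop))
    (fun t ht ↦ (hf' t ht).sub (hquad t).hasDerivWithinAt)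
    (fun t ht ↦ (hf'' t ht).sub (hasDerivAt_const_mul c).hasDerivWithinAt)
    fun t ht ↦ sub_nonneg.2 (hc t ht)

variable {E : Type*} [NormedAddCommGroup E] [NormedSpace ℝ E] {s : Set E} {g : E → ℝ} {K : ℝ}

theorem strongConvexOn_of_comp_lineMap (hs : Convex ℝ s)
    (h : ∀ x ∈ s, ∀ y ∈ s,
      StrongConvexOn (Icc (0 : ℝ) 1) (K * ‖y - x‖ ^ 2) (g ∘ AffineMap.lineMap x y)) :
    StrongConvexOn s K g := by
  refine ⟨hs, fun x hx y hy a b ha hb hab ↦ ?_⟩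
  have hline := (h x hx y hy).2 (left_mem_Icc.2 zero_le_one) (right_mem_Icc.2 zero_le_one) ha hb hab
  have hpoint : AffineMap.lineMap x y b = a • x + b • y := by
    rw [AffineMap.lineMap_apply_module, ← hab, add_sub_cancel_right]
  simp only [Function.comp_apply, smul_eq_mul, mul_zero, mul_one, zero_add, hpoint,
    AffineMap.lineMap_apply_zero, AffineMap.lineMap_apply_one, zero_sub, norm_neg, norm_one,
    one_pow] at hline
  rw [norm_sub_rev x y, smul_eq_mul, smul_eq_mul]
  linarith

theorem strongConvexOn_of_hasFDerivWithinAt2_ge (hs : Convex ℝ s) {g' : E → E →L[ℝ] ℝ}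
    {g'' : E → E →L[ℝ] E →L[ℝ] ℝ} (hg' : ∀ x ∈ s, HasFDerivWithinAt g (g' x) s x)
    (hg'' : ∀ x ∈ s, HasFDerivWithinAt g' (g'' x) s x)
    (hK : ∀ x ∈ s, ∀ y, K * ‖y‖ ^ 2 ≤ g'' x y y) : StrongConvexOn s K g := by
  refine strongConvexOn_of_comp_lineMap hs fun x hx y hy ↦ ?_
  let γ : ℝ → E := AffineMap.lineMap (k := ℝ) x y
  have hγs : MapsTo γ (Icc 0 1) s := hs.mapsTo_lineMap hx hy
  have hγ' (t : ℝ) : HasDerivWithinAt γ (y - x) (Icc 0 1) t :=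
    AffineMap.hasDerivWithinAt_lineMap
  have hfirst (t : ℝ) (ht : t ∈ Icc 0 1) :
      HasDerivWithinAt (g ∘ γ) (g' (γ t) (y - x)) (Icc 0 1) t :=
    (hg' _ (hγs ht)).comp_hasDerivWithinAt t (hγ' t) hγs
  have hsecond (t : ℝ) (ht : t ∈ Icc 0 1) :
      HasDerivWithinAt (fun t ↦ g' (γ t) (y - x)) (g'' (γ t) (y - x) (y - x)) (Icc 0 1) t := by
    simpa using! ((hg'' _ (hγs ht)).comp_hasDerivWithinAt t (hγ' t) hγs).clm_apply
      (hasDerivWithinAt_const t _ (y - x))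
  exact strongConvexOn_of_hasDerivWithinAt2_ge (convex_Icc 0 1)
    (fun t ht ↦ (hfirst t ht).continuousWithinAt)
    (fun t ht ↦ (hfirst t (interior_subset ht)).mono interior_subset)
    (fun t ht ↦ (hsecond t (interior_subset ht)).mono interior_subset)
    fun t ht ↦ hK _ (hγs (interior_subset ht)) _

end SecondDerivative

section Minimizers

variable {E : Type*} [NormedAddCommGroup E] [NormedSpace ℝ E] {s : Set E} {φ : ℝ → ℝ}
  {f g : E → ℝ} {u v : E}

theorem modulus_norm_sub_le_sub_of_isMinOn (hg : UniformConvexOn s φ g) (hv : v ∈ s)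
    (hmin : IsMinOn g s v) (hu : u ∈ s) : φ ‖u - v‖ ≤ g u - g v := by
  have hsegment (t : ℝ) (ht : t ∈ Ioo 0 1) : (1 - t) * φ ‖u - v‖ ≤ g u - g v := by
    have hb : 0 ≤ 1 - t := sub_nonneg.2 ht.2.le
    have hconv := hg.2 hu hv ht.1.le hb (add_sub_cancel t 1)
    have hle := isMinOn_iff.1 hmin _ (hg.1 hu hv ht.1.le hb (add_sub_cancel t 1))
    simp only [smul_eq_mul] at hconv
    refine le_of_mul_le_mul_left ?_ ht.1
    linarith
  have hlim : Tendsto (fun t : ℝ ↦ (1 - t) * φ ‖u - v‖) (𝓝[>] 0) (𝓝 (φ ‖u - v‖)) :=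
    tendsto_nhdsWithin_of_tendsto_nhds <|
      Continuous.tendsto' (by fun_prop) _ _ (by rw [sub_zero, one_mul])
  exact le_of_tendsto hlim (eventually_of_mem (Ioo_mem_nhdsGT one_pos) hsegment)

theorem modulus_norm_sub_le_two_mul_max_of_isMinOn (hg : UniformConvexOn s φ g) (hu : u ∈ s)
    (hv : v ∈ s) (hfmin : IsMinOn f s u) (hgmin : IsMinOn g s v) :
    φ ‖u - v‖ ≤ 2 * max |f u - g u| |f v - g v| := by
  calc φ ‖u - v‖ ≤ g u - g v := modulus_norm_sub_le_sub_of_isMinOn hg hv hgmin hu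
    _ ≤ (g u - f u) + (f v - g v) := by linarith [isMinOn_iff.1 hfmin v hv]
    _ ≤ |f u - g u| + |f v - g v| :=
      add_le_add (abs_sub_comm (f u) (g u) ▸ le_abs_self _) (le_abs_self _)
    _ ≤ 2 * max |f u - g u| |f v - g v| := by
      rw [two_mul]
      exact add_le_add (le_max_left _ _) (le_max_right _ _)

end Minimizers

theorem two_mul_rpow_neg_half_mul_sqrt {K r : ℝ} (hK : 0 < K) (hr : 0 ≤ r) :
    2 * K ^ (-(1 : ℝ) / 2) * √(K / 4 * r ^ 2) = r := by
  have hinv : K ^ (-(1 : ℝ) / 2) = (√K)⁻¹ := by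
    rw [neg_div, Real.rpow_neg hK.le, Real.sqrt_eq_rpow]
  have hsqrt : √(K / 4 * r ^ 2) = √K / 2 * r := by
    rw [Real.sqrt_mul (by positivity), Real.sqrt_sq hr, Real.sqrt_div hK.le,
      show (4 : ℝ) = 2 ^ 2 by norm_num, Real.sqrt_sq zero_le_two]
  rw [hinv, hsqrt]
  field_simp

theorem stmt0_closeness_of_minimizers_general
    {E : Type*} [NormedAddCommGroup E] [NormedSpace ℝ E] {U : Set E} {f g : E → ℝ} {K : ℝ}
    (hK : 0 < K) (hg : StrongConvexOn U K g) {u v : E} (hu : u ∈ U) (hv : v ∈ U)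
    (humin : IsMinOn f U u) (hvmin : IsMinOn g U v) :
    ENNReal.ofReal ‖u - v‖ ≤
      ENNReal.ofReal (2 * K ^ (-(1 : ℝ) / 2)) *
        (⨆ x ∈ U, ENNReal.ofReal |f x - g x|) ^ ((1 : ℝ) / 2) := by
  have hmax : K / 4 * ‖u - v‖ ^ 2 ≤ max |f u - g u| |f v - g v| := by
    linarith [modulus_norm_sub_le_two_mul_max_of_isMinOn hg hu hv humin hvmin]
  have hsup : ENNReal.ofReal (K / 4 * ‖u - v‖ ^ 2) ≤ ⨆ x ∈ U, ENNReal.ofReal |f x - g x| := by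
    refine (ENNReal.ofReal_le_ofReal hmax).trans ?_
    rw [ENNReal.ofReal_max]
    exact max_le (le_iSup₂_of_le u hu le_rfl) (le_iSup₂_of_le v hv le_rfl)
  calc ENNReal.ofReal ‖u - v‖
      = ENNReal.ofReal (2 * K ^ (-(1 : ℝ) / 2)) *
          ENNReal.ofReal (K / 4 * ‖u - v‖ ^ 2) ^ ((1 : ℝ) / 2) := by
        rw [ENNReal.ofReal_rpow_of_nonneg (by positivity) (by positivity), ← Real.sqrt_eq_rpow,
          ← ENNReal.ofReal_mul (by positivity),
          two_mul_rpow_neg_half_mul_sqrt hK (norm_nonneg _)]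
    _ ≤ _ := by gcongr

/-- Lemma on closeness of minimizers.
Let `U ⊆ ℝ^m` be a non-empty open convex set and `f, g : U → ℝ`.  Assume `g` is twice
differentiable on `U` with uniformly positive definite Hessian:
`yᵀ g''(x) y ≥ K ‖y‖²` for all `x ∈ U`, `y`, where `0 < K`.  If `u ∈ U` minimizes `f`
over `U` and `v ∈ U` minimizes `g` over `U`, then
`‖u − v‖ ≤ 2 K^{-1/2} √(sup_{x ∈ U} |f x − g x|)`, the supremum being taken in `[0,∞]`. -/
theorem stmt0_closeness_of_minimizers
    {m : ℕ} (U : Set (EuclideanSpace ℝ (Fin m)))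
    (hUne : U.Nonempty) (hUopen : IsOpen U) (hUconv : Convex ℝ U)
    (f g : EuclideanSpace ℝ (Fin m) → ℝ)
    (g' : EuclideanSpace ℝ (Fin m) → EuclideanSpace ℝ (Fin m) →L[ℝ] ℝ)
    (g'' : EuclideanSpace ℝ (Fin m) →
      EuclideanSpace ℝ (Fin m) →L[ℝ] EuclideanSpace ℝ (Fin m) →L[ℝ] ℝ)
    (hg' : ∀ x ∈ U, HasFDerivAt g (g' x) x)
    (hg'' : ∀ x ∈ U, HasFDerivAt g' (g'' x) x)
    (K : ℝ) (hK : 0 < K)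
    (hHess : ∀ x ∈ U, ∀ y : EuclideanSpace ℝ (Fin m), K * ‖y‖ ^ 2 ≤ g'' x y y)
    (u v : EuclideanSpace ℝ (Fin m)) (hu : u ∈ U) (hv : v ∈ U)
    (humin : ∀ x ∈ U, f u ≤ f x) (hvmin : ∀ x ∈ U, g v ≤ g x) :
    ENNReal.ofReal ‖u - v‖ ≤
      ENNReal.ofReal (2 * K ^ (-(1 : ℝ) / 2)) *
        (⨆ x ∈ U, ENNReal.ofReal |f x - g x|) ^ ((1 : ℝ) / 2) :=
  stmt0_closeness_of_minimizers_general hK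
    (strongConvexOn_of_hasFDerivWithinAt2_ge hUconv (fun x hx ↦ (hg' x hx).hasFDerivWithinAt)
      (fun x hx ↦ (hg'' x hx).hasFDerivWithinAt) hHess)
    hu hv (isMinOn_iff.2 humin) (isMinOn_iff.2 hvmin)
end

section
/- Let (Λ,𝒜,P) be a probability space, S and T non-empty sets, and d : T × T → [0,∞) a non-negative real-valued function. For each k ∈ ℕ let H_k : S × T × Λ → ℝ be such that ω ↦ H_k(σ,τ,ω) is measurable for every (σ,τ), and let H : S × T → ℝ. Suppose there are constants C > 0, α > 0 and a map τ : S → T such that H(σ,τ') − H(σ,τ(σ)) ≤ −C · d(τ',τ(σ))^α for all σ ∈ S and all τ' ∈ T. Suppose there are functions φ_k : (0,∞) → ℝ and a constant β < α such that δ ↦ δ^{−β} φ_k(δ) is non-increasing for every k, and such that for every δ > 0 and every k there exists a measurable function G_{k,δ} : Λ → [0,∞] with G_{k,δ}(ω) ≥ sup_{σ∈S} sup_{τ'∈T, d(τ',τ(σ))≤δ} √k · |(H_k(σ,τ',ω) − H(σ,τ')) − (H_k(σ,τ(σ),ω) − H(σ,τ(σ)))| for all ω ∈ Λ and ∫_Λ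 G_{k,δ} dP ≤ φ_k(δ). Suppose further that for every σ ∈ S and every k the map τ̂_k(σ) : Λ → T satisfies H_k(σ, τ̂_k(σ)(ω), ω) ≥ H_k(σ, τ', ω) for all τ' ∈ T and all ω ∈ Λ. Finally, let (r_k) be a sequence of positive reals with sup_{k∈ℕ} r_k^α φ_k(r_k^{−1}) / √k < ∞. Then: (i) for every σ ∈ S, τ(σ) is a maximizer of H(σ,·) over T; and (ii) lim_{M→∞} limsup_{k→∞} P^*({ω ∈ Λ : r_k · sup_{σ∈S} d(τ̂_k(σ)(ω), τ(σ)) > M}) = 0, where P^* denotes the outer measure induced by P (i.e., P applied to possibly non-measurable sets via its outer-measure extension). -/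
open MeasureTheory Filter
open scoped ENNReal

/-!
On the shell `R ≤ r · d(τ̂(σ), τ(σ)) < 2R` the curvature of `H` forces the centred criterion
`h - H` to increase by at least `C (R / r) ^ α` between `τ(σ)` and `τ̂(σ)`, because `τ̂(σ)` does at
least as well as `τ(σ)` for `h`. Markov's inequality for the outer expectation bounds the
probability of this by `φ(2R / r) / (s C (R / r) ^ α)`, where `s = √k`. Since `φ` grows at most like
`δ ^ β` and `r ^ α φ(r⁻¹) / s` is bounded, this is `O(R ^ (β - α))`, and summing over the dyadic
shells `R = M, 2M, 4M, …` gives a tail bound of order `M ^ (β - α)` that does not depend on `k`.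
-/

section OuterExpectation

variable {Λ : Type*} [MeasurableSpace Λ]

/-- The outer expectation `E^* F` of a possibly non-measurable `F`: the infimum of the integrals of
its measurable majorants. (Mathlib's `∫⁻` of a non-measurable function is the lower integral.) -/
noncomputable def outerLIntegral (μ : Measure Λ) (F : Λ → ℝ≥0∞) : ℝ≥0∞ :=
  ⨅ (G : Λ → ℝ≥0∞) (_ : Measurable G) (_ : F ≤ G), ∫⁻ ω, G ω ∂μ

theorem outerLIntegral_le_lintegral {μ : Measure Λ} {F G : Λ → ℝ≥0∞} (hG : Measurable G)
    (hFG : F ≤ G) : outerLIntegral μ F ≤ ∫⁻ ω, G ω ∂μ :=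
  iInf₂_le_of_le G hG (iInf_le _ hFG)

theorem mul_meas_ge_le_outerLIntegral (μ : Measure Λ) (F : Λ → ℝ≥0∞) (ε : ℝ≥0∞) :
    ε * μ {ω | ε ≤ F ω} ≤ outerLIntegral μ F := by
  refine le_iInf fun G => le_iInf₂ fun hG hFG => ?_
  calc ε * μ {ω | ε ≤ F ω}
    _ ≤ ε * μ {ω | ε ≤ G ω} := by gcongr with ω; exact hFG ω
    _ ≤ ∫⁻ ω, G ω ∂μ := mul_meas_ge_le_lintegral hG ε

end OuterExpectation

section Peeling

theorem exists_dyadic_mem_Ico {M x : ℝ} (hM : 0 < M) (hx : M ≤ x) :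
    ∃ n : ℕ, x ∈ Set.Ico (2 ^ n * M) (2 * (2 ^ n * M)) := by
  obtain ⟨n, hle, hlt⟩ := exists_nat_pow_near ((one_le_div hM).2 hx) one_lt_two
  rw [le_div_iff₀ hM] at hle
  rw [div_lt_iff₀ hM, pow_succ', mul_assoc] at hlt
  exact ⟨n, hle, hlt⟩

theorem measure_exists_ge_le_of_dyadic_shells {Λ S : Type*} [MeasurableSpace Λ] (μ : Measure Λ)
    (f : S → Λ → ℝ) (A : ℝ≥0∞) (p : ℝ) {M : ℝ} (hM : 0 < M)
    (hshell : ∀ R, M ≤ R →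
      μ {ω | ∃ σ, f σ ω ∈ Set.Ico R (2 * R)} ≤ A * ENNReal.ofReal (R ^ p)) :
    μ {ω | ∃ σ, M ≤ f σ ω} ≤
      A * ENNReal.ofReal (M ^ p) * (1 - ENNReal.ofReal (2 ^ p))⁻¹ := by
  have hcover : {ω | ∃ σ, M ≤ f σ ω} ⊆
      ⋃ n : ℕ, {ω | ∃ σ, f σ ω ∈ Set.Ico (2 ^ n * M) (2 * (2 ^ n * M))} := by
    rintro ω ⟨σ, hσ⟩
    obtain ⟨n, hn⟩ := exists_dyadic_mem_Ico hM hσ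
    exact Set.mem_iUnion.2 ⟨n, σ, hn⟩
  have hradius (n : ℕ) : M ≤ 2 ^ n * M :=
    le_mul_of_one_le_left hM.le (one_le_pow₀ one_le_two)
  have hpow (n : ℕ) : ENNReal.ofReal ((2 ^ n * M) ^ p) =
      ENNReal.ofReal (M ^ p) * ENNReal.ofReal (2 ^ p) ^ n := by
    rw [Real.mul_rpow (by positivity) hM.le, ← Real.rpow_pow_comm zero_le_two, mul_comm,
      ENNReal.ofReal_mul (by positivity), ENNReal.ofReal_pow (by positivity)]
  calc μ {ω | ∃ σ, M ≤ f σ ω}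
    _ ≤ ∑' n : ℕ, μ {ω | ∃ σ, f σ ω ∈ Set.Ico (2 ^ n * M) (2 * (2 ^ n * M))} :=
      (measure_mono hcover).trans (measure_iUnion_le _)
    _ ≤ ∑' n : ℕ, A * ENNReal.ofReal ((2 ^ n * M) ^ p) :=
      ENNReal.tsum_le_tsum fun n => hshell _ (hradius n)
    _ = A * ENNReal.ofReal (M ^ p) * (1 - ENNReal.ofReal (2 ^ p))⁻¹ := by
      simp only [hpow, ← mul_assoc, ENNReal.tsum_mul_left, ENNReal.tsum_geometric]

theorem tendsto_dyadic_tail_bound_atTop {A : ℝ≥0∞} (hA : A ≠ ∞) {p : ℝ} (hp : p < 0) :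
    Tendsto (fun M : ℝ => A * ENNReal.ofReal (M ^ p) * (1 - ENNReal.ofReal (2 ^ p))⁻¹)
      atTop (nhds 0) := by
  have hratio : (1 - ENNReal.ofReal (2 ^ p))⁻¹ ≠ ∞ := by
    simpa [tsub_eq_zero_iff_le] using Real.rpow_lt_one_of_one_lt_of_neg one_lt_two hp
  have hpow : Tendsto (fun M : ℝ => ENNReal.ofReal (M ^ p)) atTop (nhds 0) := by
    simpa using ENNReal.tendsto_ofReal (tendsto_rpow_neg_atTop (neg_pos.2 hp))
  simpa using ENNReal.Tendsto.mul_const (ENNReal.Tendsto.const_mul hpow (.inr hA)) (.inr hratio)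

end Peeling

section Modulus

theorem apply_mul_le_rpow_mul_of_antitoneOn {φ : ℝ → ℝ} {β c δ : ℝ}
    (hφ : AntitoneOn (fun δ => δ ^ (-β) * φ δ) (Set.Ioi 0)) (hc : 1 ≤ c) (hδ : 0 < δ) :
    φ (c * δ) ≤ c ^ β * φ δ := by
  have hc₀ : 0 < c := one_pos.trans_le hc
  have hmono : (c * δ) ^ (-β) * φ (c * δ) ≤ δ ^ (-β) * φ δ :=
    hφ hδ (mul_pos hc₀ hδ) (le_mul_of_one_le_left hδ.le hc)
  rw [Real.mul_rpow hc₀.le hδ.le, mul_comm (c ^ (-β)), mul_assoc,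
    mul_le_mul_iff_right₀ (by positivity), Real.rpow_neg hc₀.le,
    inv_mul_le_iff₀ (by positivity)] at hmono
  exact hmono

theorem modulus_le_mul_curvature {φ : ℝ → ℝ} {α β B C s r R : ℝ} (hC : 0 < C) (hs : 0 < s)
    (hr : 0 < r) (hR : 1 ≤ R) (hφ : AntitoneOn (fun δ => δ ^ (-β) * φ δ) (Set.Ioi 0))
    (hrate : r ^ α * φ r⁻¹ / s ≤ B) :
    φ (2 * R / r) ≤ B * 2 ^ β / C * R ^ (β - α) * (s * (C * (R / r) ^ α)) := by
  have hR₀ : 0 < R := one_pos.trans_le hR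
  have hφr : φ r⁻¹ ≤ B * s / r ^ α := by
    rwa [le_div_iff₀' (by positivity), ← div_le_iff₀ hs]
  calc φ (2 * R / r)
    _ ≤ (2 * R) ^ β * φ r⁻¹ := by
      rw [div_eq_mul_inv]
      exact apply_mul_le_rpow_mul_of_antitoneOn hφ (by linarith) (inv_pos.2 hr)
    _ ≤ (2 * R) ^ β * (B * s / r ^ α) := by gcongr
    _ = B * 2 ^ β / C * R ^ (β - α) * (s * (C * (R / r) ^ α)) := by
      rw [Real.mul_rpow zero_le_two hR₀.le, Real.rpow_sub hR₀, Real.div_rpow hR₀.le hr.le]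
      field_simp

/-- The modulus of continuity at the points `τ σ`, uniform in `σ`, of the process `Z` scaled by `s`:
the supremum of `s * |Z σ t - Z σ (τ σ)|` over all `σ` and all `t` with `ℓ σ t ≤ δ`. Here
`ℓ σ t` stands for the distance from `t` to `τ σ`; values in `ℝ≥0∞` allow an infinite supremum. -/
noncomputable def localModulus {S T : Type*} (ℓ : S → T → ℝ) (τ : S → T) (s : ℝ)
    (Z : S → T → ℝ) (δ : ℝ) : ℝ≥0∞ :=
  ⨆ σ : S, ⨆ t : T, ⨆ _ : ℓ σ t ≤ δ, ENNReal.ofReal (s * |Z σ t - Z σ (τ σ)|)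

variable {S T : Type*} {ℓ : S → T → ℝ} {τ : S → T} {H : S → T → ℝ} {C α s : ℝ}

theorem le_localModulus (s : ℝ) (Z : S → T → ℝ) {δ : ℝ} {σ : S} {t : T} (ht : ℓ σ t ≤ δ) :
    ENNReal.ofReal (s * |Z σ t - Z σ (τ σ)|) ≤ localModulus ℓ τ s Z δ :=
  le_iSup_of_le σ (le_iSup₂_of_le t ht le_rfl)

theorem curvature_le_localModulus (hC : 0 ≤ C) (hα : 0 ≤ α) (hs : 0 ≤ s) {σ : S} {t : T}
    (hconc : H σ t - H σ (τ σ) ≤ -C * ℓ σ t ^ α) {h : S → T → ℝ} (hht : h σ (τ σ) ≤ h σ t)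
    {u δ : ℝ} (hu : 0 ≤ u) (hut : u ≤ ℓ σ t) (ht : ℓ σ t ≤ δ) :
    ENNReal.ofReal (s * (C * u ^ α)) ≤
      localModulus ℓ τ s (fun σ t => h σ t - H σ t) δ := by
  have hincrement : C * u ^ α ≤ |h σ t - H σ t - (h σ (τ σ) - H σ (τ σ))| :=
    calc C * u ^ α
      _ ≤ C * ℓ σ t ^ α := by gcongr
      _ ≤ h σ t - H σ t - (h σ (τ σ) - H σ (τ σ)) := by linarith
      _ ≤ |h σ t - H σ t - (h σ (τ σ) - H σ (τ σ))| := le_abs_self _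
  calc ENNReal.ofReal (s * (C * u ^ α))
    _ ≤ ENNReal.ofReal (s * |h σ t - H σ t - (h σ (τ σ) - H σ (τ σ))|) := by gcongr
    _ ≤ localModulus ℓ τ s (fun σ t => h σ t - H σ t) δ := le_localModulus s _ ht

end Modulus

section RateOfConvergence

variable {Λ : Type*} [MeasurableSpace Λ] {P : Measure Λ} {S T : Type*} {ℓ : S → T → ℝ}
  {τ : S → T} {H : S → T → ℝ} {C α : ℝ}

theorem le_of_curvature (hℓ : ∀ σ t, 0 ≤ ℓ σ t) (hC : 0 ≤ C)
    (hconc : ∀ σ t, H σ t - H σ (τ σ) ≤ -C * ℓ σ t ^ α) (σ : S) (t : T) :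
    H σ t ≤ H σ (τ σ) := by
  have hnonneg : 0 ≤ C * ℓ σ t ^ α := mul_nonneg hC (Real.rpow_nonneg (hℓ σ t) α)
  linarith [hconc σ t]

section FixedSampleSize

variable {h : S → T → Λ → ℝ} {τh : S → Λ → T} {φ : ℝ → ℝ} {β B s r : ℝ}

theorem measure_shell_le_rpow_of_curvature (hC : 0 < C) (hα : 0 ≤ α)
    (hconc : ∀ σ t, H σ t - H σ (τ σ) ≤ -C * ℓ σ t ^ α)
    (hτh : ∀ σ ω, h σ (τ σ) ω ≤ h σ (τh σ ω) ω)
    (hs : 0 < s) (hr : 0 < r) (hφ : AntitoneOn (fun δ => δ ^ (-β) * φ δ) (Set.Ioi 0))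
    (hmod : ∀ δ, 0 < δ → outerLIntegral P (fun ω =>
      localModulus ℓ τ s (fun σ t => h σ t ω - H σ t) δ) ≤ ENNReal.ofReal (φ δ))
    (hrate : r ^ α * φ r⁻¹ / s ≤ B) {R : ℝ} (hR : 1 ≤ R) :
    P {ω | ∃ σ, r * ℓ σ (τh σ ω) ∈ Set.Ico R (2 * R)} ≤
      ENNReal.ofReal (B * 2 ^ β / C) * ENNReal.ofReal (R ^ (β - α)) := by
  have : 0 < R := one_pos.trans_le hR
  set ε : ℝ := s * (C * (R / r) ^ α)
  have hε₀ : 0 < ε := by positivity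
  set F : Λ → ℝ≥0∞ := fun ω =>
    localModulus ℓ τ s (fun σ t => h σ t ω - H σ t) (2 * R / r)
  have hsub : {ω | ∃ σ, r * ℓ σ (τh σ ω) ∈ Set.Ico R (2 * R)} ⊆ {ω | ENNReal.ofReal ε ≤ F ω} := by
    rintro ω ⟨σ, hle, hlt⟩
    exact curvature_le_localModulus hC.le hα hs.le (hconc σ _) (h := fun σ t => h σ t ω) (hτh σ ω)
      (by positivity) ((div_le_iff₀' hr).2 hle) ((le_div_iff₀' hr).2 hlt.le)
  rw [← ENNReal.ofReal_mul' (by positivity)]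
  refine (ENNReal.mul_le_mul_iff_right (a := ENNReal.ofReal ε) (by simpa using hε₀)
    ENNReal.ofReal_ne_top).1 ?_
  calc ENNReal.ofReal ε * P {ω | ∃ σ, r * ℓ σ (τh σ ω) ∈ Set.Ico R (2 * R)}
    _ ≤ ENNReal.ofReal ε * P {ω | ENNReal.ofReal ε ≤ F ω} := by gcongr
    _ ≤ outerLIntegral P F := mul_meas_ge_le_outerLIntegral P F _
    _ ≤ ENNReal.ofReal (φ (2 * R / r)) := hmod _ (by positivity)
    _ ≤ ENNReal.ofReal (B * 2 ^ β / C * R ^ (β - α) * ε) :=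
      ENNReal.ofReal_le_ofReal (modulus_le_mul_curvature hC hs hr hR hφ hrate)
    _ = ENNReal.ofReal ε * ENNReal.ofReal (B * 2 ^ β / C * R ^ (β - α)) := by
      rw [ENNReal.ofReal_mul' hε₀.le, mul_comm]

theorem measure_exists_ge_le_rpow_of_curvature (hC : 0 < C) (hα : 0 ≤ α)
    (hconc : ∀ σ t, H σ t - H σ (τ σ) ≤ -C * ℓ σ t ^ α)
    (hτh : ∀ σ ω, h σ (τ σ) ω ≤ h σ (τh σ ω) ω)
    (hs : 0 < s) (hr : 0 < r) (hφ : AntitoneOn (fun δ => δ ^ (-β) * φ δ) (Set.Ioi 0))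
    (hmod : ∀ δ, 0 < δ → outerLIntegral P (fun ω =>
      localModulus ℓ τ s (fun σ t => h σ t ω - H σ t) δ) ≤ ENNReal.ofReal (φ δ))
    (hrate : r ^ α * φ r⁻¹ / s ≤ B) {M : ℝ} (hM : 1 ≤ M) :
    P {ω | ∃ σ, M ≤ r * ℓ σ (τh σ ω)} ≤
      ENNReal.ofReal (B * 2 ^ β / C) * ENNReal.ofReal (M ^ (β - α)) *
        (1 - ENNReal.ofReal (2 ^ (β - α)))⁻¹ :=
  measure_exists_ge_le_of_dyadic_shells P _ _ _ (one_pos.trans_le hM) fun _ hR =>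
    measure_shell_le_rpow_of_curvature hC hα hconc hτh hs hr hφ hmod hrate (hM.trans hR)

end FixedSampleSize

theorem stmt2_uniform_rate_of_convergence_general {ι : Type*} (l : Filter ι)
    (hℓ : ∀ σ t, 0 ≤ ℓ σ t) (Hk : ι → S → T → Λ → ℝ) (hC : 0 < C) (hα : 0 < α)
    (hconc : ∀ σ t, H σ t - H σ (τ σ) ≤ -C * ℓ σ t ^ α)
    (s : ι → ℝ) (hs : ∀ᶠ k in l, 0 < s k) (φ : ι → ℝ → ℝ) {β : ℝ} (hβ : β < α)
    (hφ : ∀ k, AntitoneOn (fun δ => δ ^ (-β) * φ k δ) (Set.Ioi 0))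
    (hmod : ∀ k δ, 0 < δ → outerLIntegral P (fun ω =>
      localModulus ℓ τ (s k) (fun σ t => Hk k σ t ω - H σ t) δ) ≤ ENNReal.ofReal (φ k δ))
    (τh : ι → S → Λ → T) (hτh : ∀ k σ ω, Hk k σ (τ σ) ω ≤ Hk k σ (τh k σ ω) ω)
    (r : ι → ℝ) (hr : ∀ᶠ k in l, 0 < r k)
    (hrate : l.IsBoundedUnder (· ≤ ·) fun k => r k ^ α * φ k (r k)⁻¹ / s k) :
    (∀ σ t, H σ t ≤ H σ (τ σ)) ∧
      Tendsto (fun M : ℝ => limsup (fun k => P {ω | ∃ σ, r k * ℓ σ (τh k σ ω) > M}) l)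
        atTop (nhds 0) := by
  obtain ⟨B, hB⟩ := hrate
  have hbound := tendsto_dyadic_tail_bound_atTop
    (ENNReal.ofReal_ne_top (r := B * 2 ^ β / C)) (sub_neg.2 hβ)
  refine ⟨le_of_curvature hℓ hC.le hconc, tendsto_of_tendsto_of_tendsto_of_le_of_le'
    tendsto_const_nhds hbound (.of_forall fun _ => bot_le) ?_⟩
  filter_upwards [eventually_ge_atTop 1] with M hM
  refine limsup_le_of_le (h := ?_)
  filter_upwards [hs, hr, eventually_map.1 hB] with k hsk hrk hBk
  calc P {ω | ∃ σ, r k * ℓ σ (τh k σ ω) > M}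
    _ ≤ P {ω | ∃ σ, M ≤ r k * ℓ σ (τh k σ ω)} := by
      gcongr with ω σ; exact le_of_lt
    _ ≤ _ :=
      measure_exists_ge_le_rpow_of_curvature hC hα.le hconc (hτh k) hsk hrk (hφ k) (hmod k) hBk hM

end RateOfConvergence

/-- uniform-in-parameter rate-of-convergence theorem for M-estimators.
Let `(Λ,𝒜,P)` be a probability space, `S`, `T` non-empty sets, `d : T × T → [0,∞)`,
`H_k : S × T × Λ → ℝ` measurable in `ω`, and `H : S × T → ℝ`.  Assume the curvature
condition `H(σ,τ') − H(σ,τ(σ)) ≤ −C d(τ',τ(σ))^α`; assume the modulus-of-continuity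
condition, expressed via measurable majorants `G_{k,δ}` of the centered empirical suprema
whose integrals are bounded by `φ_k(δ)`, where `δ ↦ δ^{−β} φ_k(δ)` is non-increasing for
some `β < α`; assume `τ̂_k(σ)(ω)` maximizes `H_k(σ,·,ω)`; and let `r_k > 0` satisfy
`sup_k r_k^α φ_k(r_k⁻¹)/√k < ∞`.  Then `τ(σ)` maximizes `H(σ,·)` for every `σ`, and
`lim_{M→∞} limsup_{k→∞} P^*(r_k · sup_{σ∈S} d(τ̂_k(σ), τ(σ)) > M) = 0` (the event
`sup_σ r_k d > M` is encoded as `∃ σ, r_k d > M`; `P` applied to an arbitrary set is its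
outer-measure extension). -/
theorem stmt2_uniform_rate_of_convergence
    {Λ : Type*} [MeasurableSpace Λ] (P : Measure Λ) [IsProbabilityMeasure P]
    {S T : Type*} [Nonempty S] [Nonempty T]
    (d : T → T → ℝ) (hd : ∀ t t', 0 ≤ d t t')
    (Hk : ℕ → S → T → Λ → ℝ) (hHk_meas : ∀ k σ τ', Measurable fun ω => Hk k σ τ' ω)
    (H : S → T → ℝ)
    (C α : ℝ) (hC : 0 < C) (hα : 0 < α)
    (τ : S → T)
    (hconc : ∀ σ τ', H σ τ' - H σ (τ σ) ≤ -C * d τ' (τ σ) ^ α)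
    (φ : ℕ → ℝ → ℝ) (β : ℝ) (hβ : β < α)
    (hφ_mono : ∀ k, ∀ δ₁ δ₂ : ℝ, 0 < δ₁ → δ₁ ≤ δ₂ →
      δ₂ ^ (-β) * φ k δ₂ ≤ δ₁ ^ (-β) * φ k δ₁)
    (hmod : ∀ (k : ℕ) (δ : ℝ), 0 < δ → ∃ G : Λ → ℝ≥0∞, Measurable G ∧
      (∀ ω, (⨆ σ : S, ⨆ τ' : T, ⨆ _ : d τ' (τ σ) ≤ δ,
        ENNReal.ofReal (Real.sqrt k *
          |(Hk k σ τ' ω - H σ τ') - (Hk k σ (τ σ) ω - H σ (τ σ))|)) ≤ G ω) ∧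
      ∫⁻ ω, G ω ∂P ≤ ENNReal.ofReal (φ k δ))
    (τh : ℕ → S → Λ → T)
    (hmax : ∀ k σ ω τ', Hk k σ τ' ω ≤ Hk k σ (τh k σ ω) ω)
    (r : ℕ → ℝ) (hr : ∀ k, 0 < r k)
    (hrate : ∃ M : ℝ, ∀ k, r k ^ α * φ k (r k)⁻¹ / Real.sqrt k ≤ M) :
    (∀ σ τ', H σ τ' ≤ H σ (τ σ)) ∧
      Tendsto (fun M : ℝ =>
          limsup (fun k : ℕ =>
            P {ω | ∃ σ : S, r k * d (τh k σ ω) (τ σ) > M}) atTop)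
        atTop (nhds 0) :=
  stmt2_uniform_rate_of_convergence_general atTop (ℓ := fun σ t => d t (τ σ))
    (fun _ _ => hd _ _) Hk hC hα hconc (fun k => Real.sqrt k)
    ((eventually_gt_atTop 0).mono fun _ hk => Real.sqrt_pos.2 (Nat.cast_pos.2 hk))
    φ hβ (fun k _ h₁ _ _ h₁₂ => hφ_mono k _ _ h₁ h₁₂)
    (fun k δ hδ => let ⟨_, hG, hle, hint⟩ := hmod k δ hδ
      (outerLIntegral_le_lintegral hG hle).trans hint)
    τh (fun k σ ω => hmax k σ ω (τ σ)) r (.of_forall hr) (isBoundedUnder_of hrate)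
end

section
/- Let Θ be a non-empty compact subset of ℝ^m, (V,𝒱,μ) a probability space, Ω a non-empty bounded open interval in ℝ, and ρ : V × Θ → Ω measurable in its first argument. Assume there are a constant 0 < γ ≤ 1 and a measurable function R : V → (0,∞) such that |ρ(v,θ') − ρ(v,θ)| ≤ R(v)‖θ' − θ‖^γ for all v ∈ V and all θ, θ' ∈ Θ. Let 𝓕 be a non-empty class of functions f : Ω → ℝ such that: (i) 𝓕 is uniformly bounded in the sup-norm; (ii) there are constants 0 < β ≤ 1 and 0 < L < ∞ such that |f(x) − f(y)| ≤ L|x−y|^β for all f ∈ 𝓕 and all x,y ∈ Ω; (iii) ∫_V R^{2β} dμ < ∞; and (iv) there are constants 0 < C < ∞ and s > 1/2 such that for every ε > 0 the class 𝓕 can be covered by at most exp(C ε^{−1/s}) closed sup-norm balls of radius ε with centers belonging to 𝓕. Then there is a constant 0 < C' < ∞ such that for all ε > 0 the class 𝓕* = { f(ρ(·,θ)) : θ ∈ Θ, f ∈ 𝓕 } of functions on V satisfies H_[](ε, 𝓕*, ‖·‖_{2,μ}) ≤ C' ε^{−1/s}. -/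
open MeasureTheory
open scoped ENNReal

namespace Stmt4

variable {Λ : Type*} [MeasurableSpace Λ]

/-- `l, u : Fin n → Λ → ℝ` form a cover of the class `G` by `n` brackets of
`L²(ν)`-bracketing size at most `ε`. -/
def IsBracketCover (ν : Measure Λ) (ε : ℝ) (G : Set (Λ → ℝ)) (n : ℕ)
    (l u : Fin n → Λ → ℝ) : Prop :=
  (∀ i, Measurable (l i)) ∧ (∀ i, Measurable (u i)) ∧ (∀ i x, l i x ≤ u i x) ∧
    (∀ i, ∫⁻ x, ENNReal.ofReal ((u i x - l i x) ^ 2) ∂ν ≤ ENNReal.ofReal (ε ^ 2)) ∧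
    ∀ f ∈ G, ∃ i, ∀ x, l i x ≤ f x ∧ f x ≤ u i x

/-- The `L²(ν)`-bracketing metric entropy `H_[](ε, G, ‖·‖_{2,ν})`: the infimum of `log n`
over all `n` such that `G` can be covered by `n` brackets of `L²(ν)`-size `≤ ε` (equal to
`⊤` if no finite bracket cover exists). -/
noncomputable def bracketingEntropy (ν : Measure Λ) (ε : ℝ) (G : Set (Λ → ℝ)) : ℝ≥0∞ :=
  sInf {c : ℝ≥0∞ | ∃ (n : ℕ) (l u : Fin n → Λ → ℝ), IsBracketCover ν ε G n l u ∧
    c = ENNReal.ofReal (Real.log n)}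

end Stmt4

/-!
Fix a scale `η`, let `N` be an `η`-net of `F` for the sup-norm and `T` a `δ`-net of `Θ` with
`δ ^ (β γ) = η`. If `f` is within `η` of `c ∈ N` and `θ` within `δ` of `t ∈ T`, then
`|f (ρ v θ) - c (ρ v t)| ≤ η (1 + L R(v)^β)`, because `θ ↦ c (ρ v θ)` is Hölder of exponent `β γ`
with constant `L R(v)^β`. The envelope `1 + L R^β` is square integrable, so the `#N * #T` brackets
`c (ρ · t) ± η (1 + L R^β)` cover the composed class and have size proportional to `η`.

With `α = 1 / s` we have `log #N ≤ C η^(-α)`, and `log #T ≤ K δ^(-β γ α) = K η^(-α)`: for a bounded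
subset of a finite-dimensional space the entropy is logarithmic in `1 / δ` for small `δ` and zero
for large `δ`, hence below any negative power of `δ` up to a constant.
-/

open Metric
open scoped NNReal UniformConvergence

namespace Stmt4

theorem holderWith_iff_dist_le {X Y : Type*} [PseudoMetricSpace X] [PseudoMetricSpace Y]
    {C r : ℝ≥0} {f : X → Y} :
    HolderWith C r f ↔ ∀ x y, dist (f x) (f y) ≤ C * dist x y ^ (r : ℝ) := by
  refine ⟨HolderWith.dist_le, fun h x y => ?_⟩
  rw [edist_dist, edist_dist, ENNReal.ofReal_rpow_of_nonneg dist_nonneg r.coe_nonneg,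
    ← ENNReal.ofReal_coe_nnreal (p := C), ← ENNReal.ofReal_mul C.coe_nonneg]
  exact ENNReal.ofReal_le_ofReal (h x y)

theorem memLp_two_rpow_of_lintegral_lt_top {V : Type*} [MeasurableSpace V] {μ : Measure V}
    {R : V → ℝ≥0} (hR : Measurable R) {β : ℝ}
    (h : ∫⁻ v, ENNReal.ofReal ((R v : ℝ) ^ (2 * β)) ∂μ < ⊤) :
    MemLp (fun v => (R v : ℝ) ^ β) 2 μ := by
  have hRβ : Measurable fun v => (R v : ℝ) ^ β := hR.coe_nnreal_real.pow_const β
  have hsq : (fun v => ((R v : ℝ) ^ β) ^ 2) = fun v => (R v : ℝ) ^ (2 * β) := by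
    ext v
    rw [mul_comm 2 β, Real.rpow_mul (R v).coe_nonneg, Real.rpow_two]
  rw [memLp_two_iff_integrable_sq hRβ.aestronglyMeasurable, hsq,
    ← lintegral_ofReal_ne_top_iff_integrable
      (hR.coe_nnreal_real.pow_const (2 * β)).aestronglyMeasurable
      (ae_of_all _ fun v => Real.rpow_nonneg (R v).coe_nonneg _)]
  exact h.ne

theorem exists_pos_forall_lintegral_sq_le {V : Type*} [MeasurableSpace V] {μ : Measure V}
    {W : V → ℝ} (hW : MemLp W 2 μ) :
    ∃ Q : ℝ≥0, 0 < Q ∧ ∀ η : ℝ,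
      ∫⁻ v, ENNReal.ofReal ((2 * (η * W v)) ^ 2) ∂μ ≤ ENNReal.ofReal ((η * Q) ^ 2) := by
  have hW2 : Integrable (fun v => W v ^ 2) μ := hW.integrable_sq
  refine ⟨(√(4 * ∫ v, W v ^ 2 ∂μ + 1)).toNNReal,
    Real.toNNReal_pos.2 (Real.sqrt_pos.2 (by positivity)), fun η => ?_⟩
  have hsq : ∀ v, (2 * (η * W v)) ^ 2 = 4 * η ^ 2 * W v ^ 2 := fun v => by ring
  simp only [hsq]
  rw [← ofReal_integral_eq_lintegral_ofReal (hW2.const_mul _)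
    (ae_of_all _ fun v => by positivity), integral_const_mul]
  refine ENNReal.ofReal_le_ofReal ?_
  rw [Real.coe_toNNReal _ (Real.sqrt_nonneg _), mul_pow, Real.sq_sqrt (by positivity)]
  nlinarith [sq_nonneg η]

section MetricEntropy

/-- The metric entropy `log N(ε, S)` of `S` is at most `C ε^{-α}` at every scale `ε > 0`, where
`N(ε, S)` is the number of closed `ε`-balls centered in `S` needed to cover `S`. The bound is
stated for `N(ε, S)` itself, so that it makes sense for `S = ∅` and excludes `N(ε, S) = ∞`. -/
def HasEntropyBound {X : Type*} [PseudoEMetricSpace X] (S : Set X) (C α : ℝ) : Prop :=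
  ∀ ε : ℝ≥0, 0 < ε →
    (coveringNumber ε S : ℝ≥0∞) ≤ ENNReal.ofReal (Real.exp (C * (ε : ℝ) ^ (-α)))

theorem HasEntropyBound.exists_finset {X : Type*} [PseudoEMetricSpace X] {S : Set X} {C α : ℝ}
    (h : HasEntropyBound S C α) {ε : ℝ≥0} (hε : 0 < ε) :
    ∃ N : Finset X, ↑N ⊆ S ∧ IsCover ε S N ∧ (N.card : ℝ) ≤ Real.exp (C * (ε : ℝ) ^ (-α)) := by
  have hfin : coveringNumber ε S ≠ ⊤ := fun htop => by
    simpa [htop] using h ε hε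
  obtain ⟨N, hNS, hN, hcover, hcard⟩ := exists_set_encard_eq_coveringNumber hfin
  lift N to Finset X using hN
  have hle := h ε hε
  rw [← hcard, Set.encard_coe_eq_coe_finsetCard, ENat.toENNReal_coe,
    ← ENNReal.ofReal_natCast, ENNReal.ofReal_le_ofReal_iff (Real.exp_pos _).le] at hle
  exact ⟨N, hNS, hcover, hle⟩

theorem hasEntropyBound_preimage_toFun {Ω Y : Type*} [PseudoMetricSpace Y] {F : Set (Ω → Y)}
    {C α : ℝ} (h : ∀ ε : ℝ, 0 < ε → ∃ (n : ℕ) (c : Fin n → Ω → Y),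
      (n : ℝ) ≤ Real.exp (C * ε ^ (-α)) ∧ (∀ i, c i ∈ F) ∧
        ∀ f ∈ F, ∃ i, ∀ x, dist (f x) (c i x) ≤ ε) :
    HasEntropyBound (UniformFun.toFun ⁻¹' F : Set (Ω →ᵤ Y)) C α := by
  intro ε hε
  obtain ⟨n, c, hn, hcF, hc⟩ := h ε hε
  have hcover : IsCover ε (UniformFun.toFun ⁻¹' F : Set (Ω →ᵤ Y))
      (Set.range (UniformFun.ofFun ∘ c)) := fun f hf => by
    obtain ⟨i, hi⟩ := hc _ hf
    exact ⟨_, ⟨i, rfl⟩, UniformFun.edist_le.2 fun x => edist_le_coe.2 (hi x)⟩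
  have hsub : Set.range (UniformFun.ofFun ∘ c) ⊆ UniformFun.toFun ⁻¹' F :=
    Set.range_subset_iff.2 hcF
  have hcard : (Set.range (UniformFun.ofFun ∘ c)).encard ≤ n := by
    rw [← Set.image_univ]
    exact Set.encard_image_le _ _ |>.trans (by simp)
  calc (coveringNumber ε (UniformFun.toFun ⁻¹' F : Set (Ω →ᵤ Y)) : ℝ≥0∞)
      ≤ ((n : ℕ∞) : ℝ≥0∞) :=
        ENat.toENNReal_le.2 ((hcover.coveringNumber_le_encard hsub).trans hcard)
    _ ≤ ENNReal.ofReal (Real.exp (C * (ε : ℝ) ^ (-α))) := by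
      rw [ENat.toENNReal_coe, ← ENNReal.ofReal_natCast]
      exact ENNReal.ofReal_le_ofReal hn

section FiniteDimensional

variable {E : Type*} [NormedAddCommGroup E] [NormedSpace ℝ E] [FiniteDimensional ℝ E]

theorem encard_le_of_isSeparated_of_subset_closedBall {A : Set E} {x : E} {B : ℝ} {δ : ℝ≥0}
    (hδ : 0 < δ) (hB : 0 ≤ B) (hsep : IsSeparated δ A) (hA : A ⊆ closedBall x B) :
    (A.encard : ℝ≥0∞) ≤ ENNReal.ofReal ((1 + 2 * B / δ) ^ Module.finrank ℝ E) := by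
  borelize E
  set d := Module.finrank ℝ E
  let ν : Measure E := Measure.addHaar
  set r : ℝ := δ / 2
  have hr : 0 < r := half_pos hδ
  have hdisj : Pairwise (Function.onFun Disjoint fun c : A => ball (c : E) r) := by
    intro c c' hne
    refine ball_disjoint_ball ?_
    have hlt : (δ : ℝ≥0∞) < edist (c : E) c' := hsep c.2 c'.2 (Subtype.coe_injective.ne hne)
    rw [edist_nndist, ENNReal.coe_lt_coe, ← NNReal.coe_lt_coe, coe_nndist] at hlt
    exact (add_halves (δ : ℝ)).trans_le hlt.le
  have hsub : ⋃ c : A, ball (c : E) r ⊆ ball x (B + r) := by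
    refine Set.iUnion_subset fun c => ball_subset_ball' ?_
    linarith [mem_closedBall.1 (hA c.2)]
  have hvol : A.encard * ENNReal.ofReal (r ^ d) * ν (ball 0 1) ≤
      ENNReal.ofReal ((1 + 2 * B / δ) ^ d) * ENNReal.ofReal (r ^ d) * ν (ball 0 1) := by
    calc A.encard * ENNReal.ofReal (r ^ d) * ν (ball 0 1)
        = ∑' c : A, ν (ball (c : E) r) := by
          simp only [Measure.addHaar_ball_of_pos ν _ hr, ENNReal.tsum_set_const, mul_assoc, d]
      _ ≤ ν (⋃ c : A, ball (c : E) r) :=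
          tsum_meas_le_meas_iUnion_of_disjoint ν (fun _ => measurableSet_ball) hdisj
      _ ≤ ν (ball x (B + r)) := measure_mono hsub
      _ = ENNReal.ofReal ((1 + 2 * B / δ) ^ d) * ENNReal.ofReal (r ^ d) * ν (ball 0 1) := by
          rw [Measure.addHaar_ball_of_pos ν x (by positivity), ← ENNReal.ofReal_mul (by positivity),
            ← mul_pow]
          congr 3
          simp only [r]
          field_simp
          ring
  rwa [ENNReal.mul_le_mul_iff_left (measure_ball_pos ν 0 one_pos).ne' measure_ball_lt_top.ne,
    ENNReal.mul_le_mul_iff_left (by simpa using pow_pos hr d) ENNReal.ofReal_ne_top] at hvol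

theorem coveringNumber_le_of_subset_closedBall {A : Set E} {x : E} {B : ℝ} {δ : ℝ≥0}
    (hδ : 0 < δ) (hB : 0 ≤ B) (hA : A ⊆ closedBall x B) :
    (coveringNumber δ A : ℝ≥0∞) ≤ ENNReal.ofReal ((1 + 2 * B / δ) ^ Module.finrank ℝ E) := by
  refine (ENat.toENNReal_le.2 (coveringNumber_le_packingNumber δ A)).trans ?_
  simp only [packingNumber, ENat.toENNReal_iSup, iSup_le_iff]
  exact fun N hNA hN => encard_le_of_isSeparated_of_subset_closedBall hδ hB hN (hNA.trans hA)

theorem one_add_pow_le_exp {x α : ℝ} (hx : 1 ≤ x) (hα : 0 < α) (d : ℕ) :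
    (1 + x) ^ d ≤ Real.exp (d * ((2 * x) ^ α / α)) := by
  rw [Real.exp_nat_mul]
  refine pow_le_pow_left₀ (by positivity) ?_ d
  calc 1 + x ≤ 2 * x := by linarith
    _ ≤ Real.exp ((2 * x) ^ α / α) :=
      (Real.log_le_iff_le_exp (by positivity)).1 (Real.log_le_rpow_div (by positivity) hα)

theorem exists_hasEntropyBound_of_isBounded {A : Set E} (hA : Bornology.IsBounded A) {α : ℝ}
    (hα : 0 < α) : ∃ K : ℝ, HasEntropyBound A K α := by
  obtain ⟨B, hB, hAB⟩ := hA.subset_closedBall_lt 0 (0 : E)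
  set d := Module.finrank ℝ E
  refine ⟨d * ((2 * (2 * B)) ^ α / α), fun δ hδ => ?_⟩
  rcases le_total (2 * B) δ with hlarge | hsmall
  · have hdiam : ediam A ≤ δ := by
      refine ediam_le fun y hy z hz => ?_
      rw [edist_le_coe, ← NNReal.coe_le_coe, coe_nndist]
      linarith [dist_triangle_right y z 0, mem_closedBall.1 (hAB hy), mem_closedBall.1 (hAB hz)]
    calc (coveringNumber δ A : ℝ≥0∞) ≤ ((1 : ℕ∞) : ℝ≥0∞) :=
          ENat.toENNReal_le.2 (coveringNumber_le_one_of_ediam_le hdiam)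
      _ ≤ _ := by
        rw [ENat.toENNReal_one, ENNReal.one_le_ofReal, Real.one_le_exp_iff]
        positivity
  · have hδ' : (0 : ℝ) < δ := hδ
    refine (coveringNumber_le_of_subset_closedBall hδ hB.le hAB).trans
      (ENNReal.ofReal_le_ofReal ?_)
    refine (one_add_pow_le_exp ((one_le_div hδ').2 hsmall) hα d).trans_eq ?_
    rw [← mul_div_assoc 2 (2 * B), Real.div_rpow (by positivity) hδ'.le, Real.rpow_neg hδ'.le]
    congr 1
    ring

end FiniteDimensional

theorem hasEntropyBound_univ_subtype_iff {X : Type*} [PseudoEMetricSpace X] {S : Set X} {C α : ℝ} :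
    HasEntropyBound (Set.univ : Set S) C α ↔ HasEntropyBound S C α := by
  have hcov : ∀ ε : ℝ≥0, coveringNumber ε (Set.univ : Set S) = coveringNumber ε S := fun ε => by
    rw [← isometry_subtype_coe.coveringNumber_image' Subtype.val_injective.injOn, Set.image_univ,
      Subtype.range_coe]
  simp only [HasEntropyBound, hcov]

end MetricEntropy

section Bracketing

variable {Λ : Type*} [MeasurableSpace Λ] {ν : Measure Λ} {ε y : ℝ} {G : Set (Λ → ℝ)}

theorem IsBracketCover.bracketingEntropy_le {n : ℕ} {l u : Fin n → Λ → ℝ}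
    (h : IsBracketCover ν ε G n l u) (hn : (n : ℝ) ≤ Real.exp y) :
    bracketingEntropy ν ε G ≤ ENNReal.ofReal y := by
  have hlog : bracketingEntropy ν ε G ≤ ENNReal.ofReal (Real.log n) := sInf_le ⟨n, l, u, h, rfl⟩
  refine hlog.trans ?_
  rcases n.eq_zero_or_pos with rfl | hpos
  · simp
  · exact ENNReal.ofReal_le_ofReal ((Real.log_le_iff_le_exp (by exact_mod_cast hpos)).2 hn)

theorem bracketingEntropy_le_of_abs_sub_le {ι : Type*} [Fintype ι] {c : ι → Λ → ℝ} {w : Λ → ℝ}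
    (hc : ∀ i, Measurable (c i)) (hw : Measurable w) (hw0 : ∀ x, 0 ≤ w x)
    (hsize : ∫⁻ x, ENNReal.ofReal ((2 * w x) ^ 2) ∂ν ≤ ENNReal.ofReal (ε ^ 2))
    (hG : ∀ f ∈ G, ∃ i, ∀ x, |f x - c i x| ≤ w x)
    (hcard : (Fintype.card ι : ℝ) ≤ Real.exp y) :
    bracketingEntropy ν ε G ≤ ENNReal.ofReal y := by
  let e := (Fintype.equivFin ι).symm
  have hwidth : ∀ i x, (c i + w) x - (c i - w) x = 2 * w x := fun i x => by
    simp only [Pi.add_apply, Pi.sub_apply]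
    ring
  refine IsBracketCover.bracketingEntropy_le (l := fun i => c (e i) - w)
    (u := fun i => c (e i) + w)
    ⟨fun i => (hc _).sub hw, fun i => (hc _).add hw, fun i x => ?_, fun i => ?_,
      fun f hf => ?_⟩ hcard
  · linarith [hw0 x, hwidth (e i) x]
  · simpa only [hwidth] using hsize
  · obtain ⟨i, hi⟩ := hG f hf
    refine ⟨e.symm i, fun x => ?_⟩
    simp only [Equiv.apply_symm_apply, Pi.add_apply, Pi.sub_apply]
    constructor <;> linarith [abs_le.1 (hi x)]

end Bracketing

section Composition

variable {Θ Ω V : Type*} [PseudoMetricSpace Θ] [PseudoMetricSpace Ω]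
  {F : Set (Ω → ℝ)} {β γ L δ η : ℝ≥0}

theorem dist_comp_comp_le {Y : Type*} [PseudoMetricSpace Y] {f c : Ω → Y} {σ : Θ → Ω} {r : ℝ≥0}
    {θ t : Θ} (hfc : ∀ x, dist (f x) (c x) ≤ η) (hc : HolderWith L β c) (hσ : HolderWith r γ σ)
    (hθt : dist θ t ≤ δ) (hδη : δ ^ ((β : ℝ) * γ) = η) :
    dist (f (σ θ)) (c (σ t)) ≤ η * (1 + L * (r : ℝ) ^ (β : ℝ)) := by
  have hcσ : dist (c (σ θ)) (c (σ t)) ≤ L * (r : ℝ) ^ (β : ℝ) * η := by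
    have h := (hc.comp hσ).dist_le_of_le hθt
    rwa [NNReal.coe_mul β γ, ← NNReal.coe_rpow δ, hδη] at h
  calc dist (f (σ θ)) (c (σ t))
      ≤ dist (f (σ θ)) (c (σ θ)) + dist (c (σ θ)) (c (σ t)) := dist_triangle _ _ _
    _ ≤ η + L * (r : ℝ) ^ (β : ℝ) * η := add_le_add (hfc _) hcσ
    _ = η * (1 + L * (r : ℝ) ^ (β : ℝ)) := by ring

variable [MeasurableSpace Ω] [OpensMeasurableSpace Ω] [MeasurableSpace V] {μ : Measure V}
  {ρ : V → Θ → Ω} {R : V → ℝ≥0}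

theorem bracketingEntropy_comp_le_of_isCover {ε y : ℝ} {N : Finset (Ω →ᵤ ℝ)} {T : Finset Θ}
    (hβ : 0 < β) (hF : ∀ f ∈ F, HolderWith L β f) (hρ_meas : ∀ θ, Measurable fun v => ρ v θ)
    (hR : Measurable R) (hρ : ∀ v, HolderWith (R v) γ (ρ v))
    (hNF : ↑N ⊆ UniformFun.toFun ⁻¹' F) (hN : IsCover η (UniformFun.toFun ⁻¹' F) N)
    (hT : IsCover δ Set.univ (T : Set Θ)) (hδη : δ ^ ((β : ℝ) * γ) = η)
    (hsize : ∫⁻ v, ENNReal.ofReal ((2 * (η * (1 + L * (R v : ℝ) ^ (β : ℝ)))) ^ 2) ∂μ ≤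
      ENNReal.ofReal (ε ^ 2))
    (hcard : (N.card * T.card : ℝ) ≤ Real.exp y) :
    bracketingEntropy μ ε {g : V → ℝ | ∃ θ, ∃ f ∈ F, g = fun v => f (ρ v θ)} ≤
      ENNReal.ofReal y := by
  refine bracketingEntropy_le_of_abs_sub_le (ι := N × T)
    (c := fun p v => UniformFun.toFun p.1.1 (ρ v p.2)) (fun p => ?_)
    (((hR.coe_nnreal_real.pow_const (β : ℝ)).const_mul (L : ℝ)).const_add 1 |>.const_mul (η : ℝ))
    (fun v => by positivity) hsize ?_ ?_
  · exact ((hF _ (hNF p.1.2)).continuous hβ).measurable.comp (hρ_meas p.2)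
  · rintro g ⟨θ, f, hf, rfl⟩
    obtain ⟨c, hcN, hfc⟩ := hN (x := UniformFun.ofFun f) hf
    obtain ⟨t, htT, hθt⟩ := hT (Set.mem_univ θ)
    have hfc' : ∀ x, dist (f x) (UniformFun.toFun c x) ≤ η := fun x =>
      edist_le_coe.1 (UniformFun.edist_le.1 hfc x)
    exact ⟨(⟨c, hcN⟩, ⟨t, htT⟩), fun v =>
      dist_comp_comp_le hfc' (hF _ (hNF hcN)) (hρ v) (edist_le_coe.1 hθt) hδη⟩
  · simpa using hcard

theorem bracketingEntropy_comp_le {ε C K α : ℝ} (hβ : 0 < β) (hγ : 0 < γ)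
    (hF : ∀ f ∈ F, HolderWith L β f) (hρ_meas : ∀ θ, Measurable fun v => ρ v θ)
    (hR : Measurable R) (hρ : ∀ v, HolderWith (R v) γ (ρ v))
    (hF_entropy : HasEntropyBound (UniformFun.toFun ⁻¹' F : Set (Ω →ᵤ ℝ)) C α)
    (hΘ_entropy : HasEntropyBound (Set.univ : Set Θ) K (β * γ * α)) (hη : 0 < η)
    (hsize : ∫⁻ v, ENNReal.ofReal ((2 * (η * (1 + L * (R v : ℝ) ^ (β : ℝ)))) ^ 2) ∂μ ≤
      ENNReal.ofReal (ε ^ 2)) :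
    bracketingEntropy μ ε {g : V → ℝ | ∃ θ, ∃ f ∈ F, g = fun v => f (ρ v θ)} ≤
      ENNReal.ofReal ((C + K) * (η : ℝ) ^ (-α)) := by
  set δ : ℝ≥0 := η ^ ((β : ℝ) * γ)⁻¹
  have hδη : δ ^ ((β : ℝ) * γ) = η := NNReal.rpow_inv_rpow (by positivity) η
  have hδα : (δ : ℝ) ^ (-(β * γ * α) : ℝ) = (η : ℝ) ^ (-α) := by
    rw [← mul_neg, Real.rpow_mul δ.coe_nonneg, ← NNReal.coe_rpow, hδη]
  obtain ⟨N, hNF, hN, hN_card⟩ := hF_entropy.exists_finset hη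
  obtain ⟨T, -, hT, hT_card⟩ := hΘ_entropy.exists_finset (NNReal.rpow_pos hη : 0 < δ)
  rw [hδα] at hT_card
  refine bracketingEntropy_comp_le_of_isCover hβ hF hρ_meas hR hρ hNF hN hT hδη hsize ?_
  rw [add_mul, Real.exp_add]
  gcongr

end Composition

end Stmt4

theorem stmt4_bracketing_entropy_of_Fstar_general
    {Θ Ω V : Type*} [PseudoMetricSpace Θ] [PseudoMetricSpace Ω] [MeasurableSpace Ω]
    [OpensMeasurableSpace Ω] [MeasurableSpace V] (μ : Measure V) [IsFiniteMeasure μ]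
    (ρ : V → Θ → Ω) (hρ_meas : ∀ θ, Measurable fun v => ρ v θ)
    {γ : ℝ≥0} (hγ : 0 < γ) {R : V → ℝ≥0} (hR : Measurable R)
    (hρ : ∀ v, HolderWith (R v) γ (ρ v))
    {F : Set (Ω → ℝ)} {β L : ℝ≥0} (hβ : 0 < β) (hF : ∀ f ∈ F, HolderWith L β f)
    (hRβ : MemLp (fun v => (R v : ℝ) ^ (β : ℝ)) 2 μ) {C K α : ℝ}
    (hF_entropy : Stmt4.HasEntropyBound (UniformFun.toFun ⁻¹' F : Set (Ω →ᵤ ℝ)) C α)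
    (hΘ_entropy : Stmt4.HasEntropyBound (Set.univ : Set Θ) K (β * γ * α)) :
    ∃ C' : ℝ, 0 < C' ∧ ∀ ε : ℝ, 0 < ε →
      Stmt4.bracketingEntropy μ ε {g : V → ℝ | ∃ θ, ∃ f ∈ F, g = fun v => f (ρ v θ)} ≤
        ENNReal.ofReal (C' * ε ^ (-α)) := by
  have hone : MemLp (fun _ : V => (1 : ℝ)) 2 μ := memLp_const 1
  have henvelope : MemLp (fun v => 1 + L * (R v : ℝ) ^ (β : ℝ)) 2 μ :=
    hone.add (hRβ.const_mul (L : ℝ))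
  obtain ⟨Q, hQ, hsize⟩ := Stmt4.exists_pos_forall_lintegral_sq_le henvelope
  refine ⟨max ((C + K) * (Q : ℝ) ^ α) 1, by positivity, fun ε hε => ?_⟩
  lift ε to ℝ≥0 using hε.le
  have hεQ : ((ε / Q : ℝ≥0) * Q : ℝ) = ε := by exact_mod_cast div_mul_cancel₀ ε hQ.ne'
  have hscale : ((ε / Q : ℝ≥0) : ℝ) ^ (-α) = (Q : ℝ) ^ α * (ε : ℝ) ^ (-α) := by
    rw [NNReal.coe_div, Real.div_rpow ε.coe_nonneg Q.coe_nonneg, Real.rpow_neg Q.coe_nonneg,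
      div_inv_eq_mul, mul_comm]
  refine (Stmt4.bracketingEntropy_comp_le hβ hγ hF hρ_meas hR hρ hF_entropy hΘ_entropy
    (div_pos hε hQ) ((hsize _).trans_eq (by rw [hεQ]))).trans (ENNReal.ofReal_le_ofReal ?_)
  rw [hscale, ← mul_assoc]
  gcongr
  exact le_max_left _ _

/-- bracketing entropy bound for the simulated class `F*`.
Let `Θ ⊆ ℝ^m` be non-empty compact, `(V,𝒱,μ)` a probability space, `Ω = (a,b)` a non-empty
bounded open interval, and `ρ : V × Θ → Ω` measurable in `v` and Hölder in `θ`: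
`|ρ(v,θ') − ρ(v,θ)| ≤ R(v)‖θ'−θ‖^γ` with `R > 0` measurable.  Let `F` be a non-empty class
of functions on `Ω` that is (i) uniformly sup-norm bounded, (ii) uniformly `β`-Hölder with
constant `L`, with (iii) `∫ R^{2β} dμ < ∞`, and (iv) for all `ε > 0` coverable by at most
`exp(C ε^{−1/s})` sup-norm balls of radius `ε` centered in `F`, where `s > 1/2`.  Then there
is `0 < C' < ∞` with `H_[](ε, F*, ‖·‖_{2,μ}) ≤ C' ε^{−1/s}` for all `ε > 0`, where
`F* = {f(ρ(·,θ)) : θ ∈ Θ, f ∈ F}`. -/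
theorem stmt4_bracketing_entropy_of_Fstar
    {m : ℕ} (a b : ℝ) (hab : a < b)
    (Θ : Set (EuclideanSpace ℝ (Fin m))) (hΘc : IsCompact Θ) (hΘne : Θ.Nonempty)
    {V : Type*} [MeasurableSpace V] (μ : Measure V) [IsProbabilityMeasure μ]
    (ρ : V → Θ → Set.Ioo a b)
    (hρ_meas : ∀ θ : Θ, Measurable fun v => ρ v θ)
    (γ : ℝ) (hγ0 : 0 < γ) (hγ1 : γ ≤ 1)
    (R : V → ℝ) (hR_meas : Measurable R) (hR_pos : ∀ v, 0 < R v)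
    (hρ_hoelder : ∀ v, ∀ θ θ' : Θ,
      |((ρ v θ' : ℝ)) - ((ρ v θ : ℝ))| ≤
        R v * ‖(θ' : EuclideanSpace ℝ (Fin m)) - (θ : EuclideanSpace ℝ (Fin m))‖ ^ γ)
    (F : Set (Set.Ioo a b → ℝ)) (hFne : F.Nonempty)
    (M : ℝ) (hF_bdd : ∀ f ∈ F, ∀ x, |f x| ≤ M)
    (β L : ℝ) (hβ0 : 0 < β) (hβ1 : β ≤ 1) (hL : 0 < L)
    (hF_hoelder : ∀ f ∈ F, ∀ x y : Set.Ioo a b,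
      |f x - f y| ≤ L * |(x : ℝ) - (y : ℝ)| ^ β)
    (hR_int : ∫⁻ v, ENNReal.ofReal (R v ^ (2 * β)) ∂μ < ⊤)
    (C s : ℝ) (hC : 0 < C) (hs : 1 / 2 < s)
    (hF_cover : ∀ ε : ℝ, 0 < ε → ∃ (n : ℕ) (c : Fin n → Set.Ioo a b → ℝ),
      (n : ℝ) ≤ Real.exp (C * ε ^ (-(1 : ℝ) / s)) ∧ (∀ i, c i ∈ F) ∧
        ∀ f ∈ F, ∃ i, ∀ x, |f x - c i x| ≤ ε) :
    ∃ C' : ℝ, 0 < C' ∧ ∀ ε : ℝ, 0 < ε →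
      Stmt4.bracketingEntropy μ ε
          {g : V → ℝ | ∃ θ : Θ, ∃ f ∈ F, g = fun v => f (ρ v θ)} ≤
        ENNReal.ofReal (C' * ε ^ (-(1 : ℝ) / s)) := by
  have hs0 : 0 < s := one_half_pos.trans hs
  lift γ to ℝ≥0 using hγ0.le
  lift β to ℝ≥0 using hβ0.le
  lift L to ℝ≥0 using hL.le
  lift R to V → ℝ≥0 using fun v => (hR_pos v).le
  have hR : Measurable R := by simpa using hR_meas.real_toNNReal
  simp only [neg_div] at hF_cover ⊢
  obtain ⟨K, hK⟩ := Stmt4.exists_hasEntropyBound_of_isBounded hΘc.isBounded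
    (by positivity : 0 < (β : ℝ) * γ * (1 / s))
  exact stmt4_bracketing_entropy_of_Fstar_general μ ρ hρ_meas hγ0 hR
    (fun v => Stmt4.holderWith_iff_dist_le.2 fun θ θ' => by
      simpa only [Subtype.dist_eq, dist_eq_norm, Real.norm_eq_abs] using hρ_hoelder v θ' θ)
    hβ0 (fun f hf => Stmt4.holderWith_iff_dist_le.2 (hF_hoelder f hf))
    (Stmt4.memLp_two_rpow_of_lintegral_lt_top hR hR_int)
    (Stmt4.hasEntropyBound_preimage_toFun hF_cover)
    (Stmt4.hasEntropyBound_univ_subtype_iff.2 hK)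
end

section
/- Let Θ be a non-empty compact subset of ℝ^m, (V,𝒱,μ) a probability space, Ω a non-empty bounded open interval in ℝ, and ρ : V × Θ → Ω measurable in its first argument. Assume there are a constant 0 < γ ≤ 1 and a measurable function R : V → (0,∞) such that |ρ(v,θ') − ρ(v,θ)| ≤ R(v)‖θ' − θ‖^γ for all v ∈ V and all θ, θ' ∈ Θ. Let 𝓕 be a non-empty class of functions f : Ω → ℝ such that: (i) 𝓕 is uniformly bounded in the sup-norm; (ii) there are constants 0 < β ≤ 1 and 0 < L < ∞ such that |f(x) − f(y)| ≤ L|x−y|^β for all f ∈ 𝓕 and all x,y ∈ Ω; (iii) ∫_V R^{2β} dμ < ∞; (iv) there are constants 0 < C < ∞ and s > 1/2 such that for every ε > 0 the class 𝓕 can be covered by at most exp(C ε^{−1/s}) closed sup-norm balls of radius ε with centers belonging to 𝓕; and (v) there is a constant χ > 0 with f(x) ≥ χ for all f ∈ 𝓕 and all x ∈ Ω. Then there is a constant 0 < C'' < ∞ such that for all ε > 0 the class log 𝓕* = { log f(ρ(·,θ)) : θ ∈ Θ, f ∈ 𝓕 } of functions on V satisfies H_[](ε, log 𝓕*, ‖·‖_{2,μ})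 ≤ C'' ε^{−1/s}. -/
open MeasureTheory
open scoped ENNReal

namespace Stmt5

variable {Λ : Type*} [MeasurableSpace Λ]

/-- `l, u : Fin n → Λ → ℝ` form a cover of the class `G` by `n` brackets of
`L²(ν)`-bracketing size at most `ε`. -/
def IsBracketCover (ν : Measure Λ) (ε : ℝ) (G : Set (Λ → ℝ)) (n : ℕ)
    (l u : Fin n → Λ → ℝ) : Prop :=
  (∀ i, Measurable (l i)) ∧ (∀ i, Measurable (u i)) ∧ (∀ i x, l i x ≤ u i x) ∧
    (∀ i, ∫⁻ x, ENNReal.ofReal ((u i x - l i x) ^ 2) ∂ν ≤ ENNReal.ofReal (ε ^ 2)) ∧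
    ∀ f ∈ G, ∃ i, ∀ x, l i x ≤ f x ∧ f x ≤ u i x

/-- The `L²(ν)`-bracketing metric entropy `H_[](ε, G, ‖·‖_{2,ν})`: the infimum of `log n`
over all `n` such that `G` can be covered by `n` brackets of `L²(ν)`-size `≤ ε` (equal to
`⊤` if no finite bracket cover exists). -/
noncomputable def bracketingEntropy (ν : Measure Λ) (ε : ℝ) (G : Set (Λ → ℝ)) : ℝ≥0∞ :=
  sInf {c : ℝ≥0∞ | ∃ (n : ℕ) (l u : Fin n → Λ → ℝ), IsBracketCover ν ε G n l u ∧
    c = ENNReal.ofReal (Real.log n)}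

end Stmt5

/-!
Since `log` is Lipschitz on `[χ, ∞)`, the class `log ∘ F` inherits the Hölder condition and the
sup-norm entropy growth of `F`, so that it suffices to bracket `f (ρ(·, θ))`. If `c` is a member of
`F` within `δ` of `f` and `|θ - τ| ≤ δ ^ (1 / (γ * β))`, then
`|f (ρ(v, θ)) - c (ρ(v, τ))| ≤ δ * (1 + L * R(v) ^ β)`, whose right-hand side is square integrable:
nets of `F` and `Θ` at these two scales give brackets of size proportional to `δ`. The net of `Θ`
has only polynomially many points, and `max 1 x ≤ exp (x ^ q / q)` for every `q > 0` bounds the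
logarithm of their number by a multiple of `δ ^ (-1 / s)`, for large `δ` as well as for small ones.
-/

namespace Stmt5

open Metric Module
open scoped NNReal UniformConvergence

section CoveringNumber

variable {Y : Type*} [PseudoEMetricSpace Y] {δ : ℝ≥0} {s : Set Y} {p : ℝ}

theorem coveringNumber_le_ofReal_iff {a : ℝ} (ha : 0 ≤ a) :
    (coveringNumber δ s : ℝ≥0∞) ≤ ENNReal.ofReal a ↔
      ∃ t : Finset Y, ↑t ⊆ s ∧ IsCover δ s t ∧ (t.card : ℝ) ≤ a := by
  constructor
  · intro h
    have hfin : coveringNumber δ s ≠ ⊤ := by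
      intro htop
      simp [htop] at h
    obtain ⟨t, hts, htfin, hcover, hcard⟩ := exists_set_encard_eq_coveringNumber hfin
    lift t to Finset Y using htfin
    rw [← hcard, Set.encard_coe_eq_coe_finsetCard, ENat.toENNReal_coe,
      ← ENNReal.ofReal_natCast, ENNReal.ofReal_le_ofReal_iff ha] at h
    exact ⟨t, hts, hcover, h⟩
  · rintro ⟨t, hts, hcover, hcard⟩
    calc (coveringNumber δ s : ℝ≥0∞) ≤ (t : Set Y).encard :=
          ENat.toENNReal_le.2 (hcover.coveringNumber_le_encard hts)
      _ = ENNReal.ofReal t.card := by simp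
      _ ≤ ENNReal.ofReal a := ENNReal.ofReal_le_ofReal hcard

/-- The set `s` has metric entropy `log N(δ, s) = O(δ ^ (-p))`, with one constant for all `δ > 0`.
The covering numbers are Mathlib's internal ones: the centers belong to `s`. For the sup-norm
entropy of a class `F` of real functions, `s` is `UniformFun.ofFun '' F`. -/
def HasEntropyGrowth (s : Set Y) (p : ℝ) : Prop :=
  ∃ C : ℝ≥0, ∀ δ : ℝ≥0, 0 < δ →
    (coveringNumber δ s : ℝ≥0∞) ≤ ENNReal.ofReal (Real.exp (C * (δ : ℝ) ^ (-p)))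

theorem HasEntropyGrowth.univ_subtype (hs : HasEntropyGrowth s p) :
    HasEntropyGrowth (Set.univ : Set s) p := by
  obtain ⟨C, hC⟩ := hs
  refine ⟨C, fun δ hδ => ?_⟩
  rw [← isometry_subtype_coe.coveringNumber_image' Subtype.val_injective.injOn,
    Set.image_univ, Subtype.range_coe]
  exact hC δ hδ

theorem HasEntropyGrowth.image_of_lipschitzOnWith {Z : Type*} [PseudoEMetricSpace Z] {φ : Y → Z}
    {K : ℝ≥0} (hs : HasEntropyGrowth s p) (hφ : LipschitzOnWith K φ s) :
    HasEntropyGrowth (φ '' s) p := by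
  classical
  obtain ⟨C, hC⟩ := hs
  refine ⟨C * (K + 1) ^ p, fun δ hδ => ?_⟩
  obtain ⟨t, hts, hcover, hcard⟩ :=
    (coveringNumber_le_ofReal_iff (Real.exp_pos _).le).1 (hC (δ / (K + 1)) (by positivity))
  refine (coveringNumber_le_ofReal_iff (Real.exp_pos _).le).2 ⟨t.image φ, ?_, ?_, ?_⟩
  · rw [Finset.coe_image]
    exact Set.image_mono hts
  · rintro _ ⟨y, hy, rfl⟩
    obtain ⟨z, hz, hyz⟩ := hcover hy
    refine ⟨φ z, Finset.mem_coe.2 (Finset.mem_image_of_mem φ hz), ?_⟩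
    calc edist (φ y) (φ z) ≤ K * (δ / (K + 1) : ℝ≥0) := hφ.edist_le_mul_of_le hy (hts hz) hyz
      _ ≤ δ := by
        norm_cast
        rw [mul_div_assoc', div_le_iff₀ (by positivity), mul_comm]
        gcongr
        exact le_self_add
  · calc ((t.image φ).card : ℝ) ≤ t.card := mod_cast Finset.card_image_le
      _ ≤ Real.exp (C * ((δ / (K + 1) : ℝ≥0) : ℝ) ^ (-p)) := hcard
      _ = Real.exp ((C * (K + 1) ^ p : ℝ≥0) * (δ : ℝ) ^ (-p)) := by
        push_cast
        rw [Real.div_rpow (by positivity) (by positivity), Real.rpow_neg (x := (K : ℝ) + 1)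
          (by positivity), div_inv_eq_mul]
        ring_nf

end CoveringNumber

section FiniteDimensional

variable {E : Type*} [NormedAddCommGroup E] [NormedSpace ℝ E] [FiniteDimensional ℝ E]
  {s : Set E} {r : ℝ} {δ : ℝ≥0}

-- Compare volumes: the balls of radius `δ / 2` around the points of `s` are disjoint and contained
-- in `ball 0 (r + δ / 2)`.
theorem encard_le_of_isSeparated_of_subset_closedBall (hδ : 0 < δ) (hr : 0 ≤ r)
    (hs : s ⊆ closedBall 0 r) (hsep : IsSeparated δ s) :
    (s.encard : ℝ≥0∞) ≤ ENNReal.ofReal ((1 + 2 * r / δ) ^ finrank ℝ E) := by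
  borelize E
  let ν : Measure E := Measure.addHaar
  have hδ' : (0 : ℝ) < δ / 2 := by positivity
  have hdisj : Pairwise (Function.onFun Disjoint fun x : s => ball (x : E) (δ / 2)) := by
    intro x y hxy
    have hlt : (δ : ℝ≥0∞) < edist (x : E) y := hsep x.2 y.2 (Subtype.coe_ne_coe.2 hxy)
    rw [edist_nndist, ENNReal.coe_lt_coe, ← NNReal.coe_lt_coe, coe_nndist] at hlt
    exact ball_disjoint_ball (by linarith)
  have hsub : ⋃ x : s, ball (x : E) (δ / 2) ⊆ ball 0 (r + δ / 2) :=
    Set.iUnion_subset fun x => ball_subset_ball' (by linarith [mem_closedBall.1 (hs x.2)])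
  have hvol : s.encard * ENNReal.ofReal ((δ / 2 : ℝ) ^ finrank ℝ E) * ν (ball 0 1) ≤
      ENNReal.ofReal ((r + δ / 2) ^ finrank ℝ E) * ν (ball 0 1) :=
    calc s.encard * ENNReal.ofReal ((δ / 2 : ℝ) ^ finrank ℝ E) * ν (ball 0 1)
        = ∑' x : s, ν (ball (x : E) (δ / 2)) := by
          simp only [ν.addHaar_ball_of_pos _ hδ', ENNReal.tsum_const, mul_assoc, Set.encard]
      _ ≤ ν (⋃ x : s, ball (x : E) (δ / 2)) :=
          tsum_meas_le_meas_iUnion_of_disjoint ν (fun _ => measurableSet_ball) hdisj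
      _ ≤ ν (ball 0 (r + δ / 2)) := measure_mono hsub
      _ = ENNReal.ofReal ((r + δ / 2) ^ finrank ℝ E) * ν (ball 0 1) :=
          ν.addHaar_ball_of_pos _ (by positivity)
  rw [ENNReal.mul_le_mul_iff_left (measure_ball_pos _ _ zero_lt_one).ne' measure_ball_lt_top.ne,
    ← ENNReal.le_div_iff_mul_le (.inl (ENNReal.ofReal_pos.2 (by positivity)).ne')
      (.inl ENNReal.ofReal_ne_top),
    ← ENNReal.ofReal_div_of_pos (by positivity), ← div_pow] at hvol
  convert hvol using 4
  field_simp
  ring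

theorem coveringNumber_le_max_one_pow (hδ : 0 < δ) (hs : s ⊆ closedBall 0 r) :
    (coveringNumber δ s : ℝ≥0∞) ≤ ENNReal.ofReal (max 1 (4 * r / δ) ^ finrank ℝ E) := by
  rcases le_or_gt (2 * r) δ with hr | hr
  · have hdiam : ediam s ≤ δ := by
      refine ediam_le fun x hx y hy => ?_
      rw [edist_dist, ← ENNReal.ofReal_coe_nnreal]
      refine ENNReal.ofReal_le_ofReal ?_
      linarith [dist_triangle_right x y 0, mem_closedBall.1 (hs hx), mem_closedBall.1 (hs hy)]
    calc (coveringNumber δ s : ℝ≥0∞) ≤ (1 : ℕ∞) :=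
          ENat.toENNReal_le.2 (coveringNumber_le_one_of_ediam_le hdiam)
      _ ≤ ENNReal.ofReal (max 1 (4 * r / δ) ^ finrank ℝ E) := by
        rw [ENat.toENNReal_one, ENNReal.one_le_ofReal]
        exact one_le_pow₀ (le_max_left _ _)
  · have hr0 : 0 ≤ r := by linarith [δ.coe_nonneg]
    have hbase : 1 + 2 * r / δ ≤ max 1 (4 * r / δ) := by
      refine le_max_of_le_right ?_
      have : 1 ≤ 2 * r / (δ : ℝ) := (one_le_div (by positivity)).2 hr.le
      linarith [show 4 * r / (δ : ℝ) = 2 * r / δ + 2 * r / δ by ring]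
    calc (coveringNumber δ s : ℝ≥0∞) ≤ packingNumber δ s :=
          ENat.toENNReal_le.2 (coveringNumber_le_packingNumber δ s)
      _ ≤ ENNReal.ofReal ((1 + 2 * r / δ) ^ finrank ℝ E) := by
        simp only [packingNumber, ENat.toENNReal_iSup, iSup_le_iff]
        exact fun t hts => encard_le_of_isSeparated_of_subset_closedBall hδ hr0 (hts.trans hs)
      _ ≤ ENNReal.ofReal (max 1 (4 * r / δ) ^ finrank ℝ E) := by gcongr

theorem hasEntropyGrowth_of_isBounded (hs : Bornology.IsBounded s) {p : ℝ} (hp : 0 < p) :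
    HasEntropyGrowth s p := by
  obtain ⟨r, hr, hsr⟩ := hs.subset_closedBall_lt 0 0
  lift r to ℝ≥0 using hr.le
  refine ⟨finrank ℝ E * ((4 * r) ^ p / p.toNNReal), fun δ hδ => ?_⟩
  refine (coveringNumber_le_max_one_pow hδ hsr).trans (ENNReal.ofReal_le_ofReal ?_)
  have hmax : max 1 (4 * r / δ : ℝ) ≤ Real.exp ((4 * r / δ : ℝ) ^ p / p) := by
    refine max_le (Real.one_le_exp (by positivity)) ?_
    exact (Real.le_exp_log _).trans (Real.exp_le_exp.2 (Real.log_le_rpow_div (by positivity) hp))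
  calc max 1 (4 * r / δ : ℝ) ^ finrank ℝ E
      ≤ Real.exp ((4 * r / δ : ℝ) ^ p / p) ^ finrank ℝ E := by gcongr
    _ = Real.exp (↑(finrank ℝ E * ((4 * r) ^ p / p.toNNReal)) * (δ : ℝ) ^ (-p)) := by
      rw [← Real.exp_nat_mul, Real.div_rpow (by positivity) (by positivity),
        Real.rpow_neg (by positivity)]
      push_cast
      rw [Real.coe_toNNReal p hp.le]
      ring_nf

end FiniteDimensional

section UniformFun

variable {X : Type*} {F : Set (X → ℝ)} {p : ℝ}

theorem edist_ofFun_le_iff {f g : X → ℝ} {δ : ℝ≥0} :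
    edist (UniformFun.ofFun f) (UniformFun.ofFun g) ≤ δ ↔ ∀ x, |f x - g x| ≤ δ := by
  simp only [UniformFun.edist_le, UniformFun.toFun_ofFun, edist_nndist, ENNReal.coe_le_coe,
    ← NNReal.coe_le_coe, coe_nndist, Real.dist_eq]

theorem hasEntropyGrowth_image_ofFun {C : ℝ} (hC : 0 ≤ C)
    (hF : ∀ ε : ℝ, 0 < ε → ∃ (n : ℕ) (c : Fin n → X → ℝ), (n : ℝ) ≤ Real.exp (C * ε ^ (-p)) ∧
      (∀ i, c i ∈ F) ∧ ∀ f ∈ F, ∃ i, ∀ x, |f x - c i x| ≤ ε) :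
    HasEntropyGrowth (UniformFun.ofFun '' F) p := by
  classical
  lift C to ℝ≥0 using hC
  refine ⟨C, fun δ hδ => ?_⟩
  obtain ⟨n, c, hn, hcF, hc⟩ := hF δ hδ
  refine (coveringNumber_le_ofReal_iff (Real.exp_pos _).le).2
    ⟨Finset.univ.image fun i => UniformFun.ofFun (c i), ?_, ?_, ?_⟩
  · simpa [Set.subset_def] using hcF
  · rintro _ ⟨f, hf, rfl⟩
    obtain ⟨i, hi⟩ := hc f hf
    exact ⟨UniformFun.ofFun (c i), by simp, edist_ofFun_le_iff.2 hi⟩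
  · refine le_trans ?_ hn
    exact_mod_cast Finset.card_image_le.trans_eq (by simp)

theorem HasEntropyGrowth.comp_lipschitzOnWith {φ : ℝ → ℝ} {K : ℝ≥0} {S : Set ℝ}
    (hF : HasEntropyGrowth (UniformFun.ofFun '' F) p) (hφ : LipschitzOnWith K φ S)
    (hFS : ∀ f ∈ F, ∀ x, f x ∈ S) :
    HasEntropyGrowth (UniformFun.ofFun '' ((φ ∘ ·) '' F)) p := by
  have hlip : LipschitzOnWith K (fun f : X →ᵤ ℝ => UniformFun.ofFun (φ ∘ UniformFun.toFun f))
      (UniformFun.ofFun '' F) := by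
    refine UniformFun.lipschitzOnWith_ofFun_iff.2 fun x => ?_
    rintro _ ⟨f, hf, rfl⟩ _ ⟨g, hg, rfl⟩
    exact (hφ (hFS f hf x) (hFS g hg x)).trans (by gcongr; exact UniformFun.edist_eval_le)
  simpa only [Set.image_image, UniformFun.toFun_ofFun] using hF.image_of_lipschitzOnWith hlip

end UniformFun

section Bracketing

variable {V : Type*} [MeasurableSpace V] {μ : Measure V} {ε : ℝ} {G : Set (V → ℝ)}

theorem bracketingEntropy_le_log_card {ι : Type*} [Fintype ι] {c : ι → V → ℝ} {w : V → ℝ}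
    (hc : ∀ i, Measurable (c i)) (hw : Measurable w) (hw_nonneg : ∀ x, 0 ≤ w x)
    (hw_size : ∫⁻ x, ENNReal.ofReal ((2 * w x) ^ 2) ∂μ ≤ ENNReal.ofReal (ε ^ 2))
    (hG : ∀ g ∈ G, ∃ i, ∀ x, |g x - c i x| ≤ w x) :
    bracketingEntropy μ ε G ≤ ENNReal.ofReal (Real.log (Fintype.card ι)) := by
  let e := (Fintype.equivFin ι).symm
  refine sInf_le ⟨Fintype.card ι, fun k x => c (e k) x - w x, fun k x => c (e k) x + w x,
    ⟨fun k => (hc _).sub hw, fun k => (hc _).add hw, fun k x => ?_, fun k => ?_, fun g hg => ?_⟩,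
    rfl⟩
  · linarith [hw_nonneg x]
  · simpa only [add_sub_sub_cancel, ← two_mul] using hw_size
  · obtain ⟨i, hi⟩ := hG g hg
    refine ⟨e.symm i, fun x => ?_⟩
    obtain ⟨hlower, hupper⟩ := abs_le.1 (hi x)
    simp only [e.apply_symm_apply]
    constructor <;> linarith

theorem exists_scale_lintegral_sq_le {W : V → ℝ} (hW : MemLp W 2 μ) :
    ∃ K : ℝ, 0 < K ∧ ∀ ε : ℝ,
      ∫⁻ x, ENNReal.ofReal ((2 * (ε / K * W x)) ^ 2) ∂μ ≤ ENNReal.ofReal (ε ^ 2) := by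
  have hfin : ∫⁻ x, ENNReal.ofReal (W x ^ 2) ∂μ ≠ ⊤ := hW.integrable_sq.lintegral_lt_top.ne
  set I := (∫⁻ x, ENNReal.ofReal (W x ^ 2) ∂μ).toReal with hI
  have hI_nonneg : 0 ≤ I := ENNReal.toReal_nonneg
  refine ⟨2 * √(I + 1), by positivity, fun ε => ?_⟩
  have hsq (x : V) : (2 * (ε / (2 * √(I + 1)) * W x)) ^ 2 = ε ^ 2 / (I + 1) * W x ^ 2 := by
    rw [mul_pow, mul_pow, div_pow, mul_pow, Real.sq_sqrt (by positivity)]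
    field_simp
  calc ∫⁻ x, ENNReal.ofReal ((2 * (ε / (2 * √(I + 1)) * W x)) ^ 2) ∂μ
      = ENNReal.ofReal (ε ^ 2 / (I + 1)) * ∫⁻ x, ENNReal.ofReal (W x ^ 2) ∂μ := by
        simp only [hsq, ENNReal.ofReal_mul (show 0 ≤ ε ^ 2 / (I + 1) by positivity)]
        exact lintegral_const_mul' _ _ ENNReal.ofReal_ne_top
    _ = ENNReal.ofReal (ε ^ 2 / (I + 1) * I) := by
        rw [ENNReal.ofReal_mul (by positivity), hI, ENNReal.ofReal_toReal hfin]
    _ ≤ ENNReal.ofReal (ε ^ 2) := by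
        refine ENNReal.ofReal_le_ofReal ?_
        rw [div_mul_eq_mul_div, div_le_iff₀ (by positivity)]
        gcongr
        linarith

theorem memLp_two_rpow {R : V → ℝ} {β : ℝ} (hR : Measurable R) (hR_nonneg : ∀ v, 0 ≤ R v)
    (hR_int : ∫⁻ v, ENNReal.ofReal (R v ^ (2 * β)) ∂μ < ⊤) : MemLp (fun v => R v ^ β) 2 μ := by
  have hsq (v : V) : (R v ^ β) ^ 2 = R v ^ (2 * β) := by
    rw [mul_comm, Real.rpow_mul (hR_nonneg v), Real.rpow_two]
  rw [memLp_two_iff_integrable_sq (hR.pow_const β).aestronglyMeasurable]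
  simp only [hsq]
  refine ⟨(hR.pow_const _).aestronglyMeasurable, ?_⟩
  rwa [hasFiniteIntegral_iff_ofReal (ae_of_all _ fun v => Real.rpow_nonneg (hR_nonneg v) _)]

end Bracketing

section Composition

variable {X : Type*} [PseudoMetricSpace X] {β L : ℝ}

theorem continuous_of_abs_sub_le_mul_rpow {f : X → ℝ} (hβ : 0 < β)
    (hf : ∀ x y, |f x - f y| ≤ L * dist x y ^ β) : Continuous f := by
  refine continuous_iff_continuousAt.2 fun y => tendsto_iff_dist_tendsto_zero.2 ?_
  refine squeeze_zero (fun _ => dist_nonneg) (fun x => hf x y) ?_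
  have hcont : Continuous fun x => L * dist x y ^ β :=
    continuous_const.mul ((continuous_id.dist continuous_const).rpow_const fun _ => .inr hβ.le)
  simpa [hβ.ne'] using hcont.tendsto y

variable {T : Type*} [PseudoMetricSpace T] {V : Type*} {ρ : V → T → X} {R : V → ℝ} {γ p : ℝ}

theorem abs_comp_sub_comp_le {f c : X → ℝ} {δ : ℝ} {v : V} {θ τ : T}
    (hβ : 0 < β) (hγ : 0 < γ) (hL : 0 ≤ L) (hδ : 0 ≤ δ) (hR : 0 ≤ R v)
    (hρ : dist (ρ v θ) (ρ v τ) ≤ R v * dist θ τ ^ γ)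
    (hc : ∀ x y, |c x - c y| ≤ L * dist x y ^ β)
    (hfc : ∀ x, |f x - c x| ≤ δ) (hθτ : dist θ τ ≤ δ ^ (γ * β)⁻¹) :
    |f (ρ v θ) - c (ρ v τ)| ≤ δ * (1 + L * R v ^ β) := by
  have hpow : (dist θ τ ^ γ) ^ β ≤ δ := by
    rw [← Real.rpow_mul dist_nonneg]
    exact (Real.le_rpow_inv_iff_of_pos dist_nonneg hδ (by positivity)).1 hθτ
  calc |f (ρ v θ) - c (ρ v τ)|
      ≤ |f (ρ v θ) - c (ρ v θ)| + |c (ρ v θ) - c (ρ v τ)| := abs_sub_le _ _ _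
    _ ≤ δ + L * (R v * dist θ τ ^ γ) ^ β := by
        gcongr
        · exact hfc _
        · exact (hc _ _).trans (by gcongr)
    _ = δ + L * (R v ^ β * (dist θ τ ^ γ) ^ β) := by rw [Real.mul_rpow hR (by positivity)]
    _ ≤ δ + L * (R v ^ β * δ) := by gcongr
    _ = δ * (1 + L * R v ^ β) := by ring

variable [MeasurableSpace X] [OpensMeasurableSpace X] [MeasurableSpace V] {μ : Measure V}
  {F : Set (X → ℝ)}

theorem bracketingEntropy_comp_le_log_mul {ε : ℝ} {δ : ℝ≥0} {t : Finset (X →ᵤ ℝ)} {u : Finset T}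
    (hγ : 0 < γ) (hβ : 0 < β) (hL : 0 ≤ L) (hρ_meas : ∀ θ, Measurable fun v => ρ v θ)
    (hR_meas : Measurable R) (hR_nonneg : ∀ v, 0 ≤ R v)
    (hρ : ∀ v θ θ', dist (ρ v θ') (ρ v θ) ≤ R v * dist θ' θ ^ γ)
    (hF_hoelder : ∀ f ∈ F, ∀ x y, |f x - f y| ≤ L * dist x y ^ β)
    (htF : ↑t ⊆ UniformFun.ofFun '' F) (ht : IsCover δ (UniformFun.ofFun '' F) t)
    (hu : IsCover (δ ^ (γ * β)⁻¹) (Set.univ : Set T) u)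
    (hsize : ∫⁻ v, ENNReal.ofReal ((2 * (δ * (1 + L * R v ^ β))) ^ 2) ∂μ ≤
      ENNReal.ofReal (ε ^ 2)) :
    bracketingEntropy μ ε {g | ∃ θ : T, ∃ f ∈ F, g = fun v => f (ρ v θ)} ≤
      ENNReal.ofReal (Real.log (t.card * u.card)) := by
  have ht_hoelder (c : t) (x y : X) : |c.1.toFun x - c.1.toFun y| ≤ L * dist x y ^ β := by
    obtain ⟨f, hf, hfc⟩ := htF c.2
    simpa only [← hfc, UniformFun.toFun_ofFun] using hF_hoelder f hf x y
  have hbrackets := bracketingEntropy_le_log_card (μ := μ) (ε := ε)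
    (G := {g | ∃ θ : T, ∃ f ∈ F, g = fun v => f (ρ v θ)})
    (c := fun (i : t × u) v => i.1.1.toFun (ρ v i.2)) (w := fun v => δ * (1 + L * R v ^ β))
    (fun i => (continuous_of_abs_sub_le_mul_rpow hβ (ht_hoelder i.1)).measurable.comp (hρ_meas i.2))
    (by fun_prop) (fun v => by have := hR_nonneg v; positivity) hsize ?_
  · simpa using hbrackets
  rintro _ ⟨θ, f, hf, rfl⟩
  obtain ⟨c, hct, hfc⟩ := ht (Set.mem_image_of_mem _ hf)
  obtain ⟨τ, hτu, hθτ⟩ := hu (Set.mem_univ θ)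
  refine ⟨(⟨c, hct⟩, ⟨τ, hτu⟩), fun v => ?_⟩
  refine abs_comp_sub_comp_le hβ hγ hL δ.2 (hR_nonneg v) (hρ v τ θ) (ht_hoelder ⟨c, hct⟩)
    (edist_ofFun_le_iff.1 hfc) ?_
  rw [← NNReal.coe_rpow]
  exact edist_le_coe.1 hθτ

variable [IsFiniteMeasure μ]

theorem exists_bracketingEntropy_comp_le (hγ : 0 < γ) (hβ : 0 < β) (hL : 0 ≤ L)
    (hT : HasEntropyGrowth (Set.univ : Set T) (γ * β * p))
    (hρ_meas : ∀ θ, Measurable fun v => ρ v θ)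
    (hR_meas : Measurable R) (hR_nonneg : ∀ v, 0 ≤ R v) (hR_memLp : MemLp (fun v => R v ^ β) 2 μ)
    (hρ : ∀ v θ θ', dist (ρ v θ') (ρ v θ) ≤ R v * dist θ' θ ^ γ)
    (hF : HasEntropyGrowth (UniformFun.ofFun '' F) p)
    (hF_hoelder : ∀ f ∈ F, ∀ x y, |f x - f y| ≤ L * dist x y ^ β) :
    ∃ C : ℝ, 0 < C ∧ ∀ ε : ℝ, 0 < ε →
      bracketingEntropy μ ε {g | ∃ θ : T, ∃ f ∈ F, g = fun v => f (ρ v θ)} ≤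
        ENNReal.ofReal (C * ε ^ (-p)) := by
  obtain ⟨A, hA⟩ := hF
  obtain ⟨B, hB⟩ := hT
  obtain ⟨K, hK, hsize⟩ := exists_scale_lintegral_sq_le
    ((memLp_const (1 : ℝ)).add (hR_memLp.const_mul L))
  refine ⟨(A + B) * K ^ p + 1, by positivity, fun ε hε => ?_⟩
  obtain ⟨δ, hδ⟩ : ∃ δ : ℝ≥0, (δ : ℝ) = ε / K := ⟨⟨ε / K, by positivity⟩, rfl⟩
  have hδ_pos : 0 < δ := NNReal.coe_pos.1 (hδ ▸ by positivity)
  obtain ⟨t, htF, ht, ht_card⟩ :=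
    (coveringNumber_le_ofReal_iff (Real.exp_pos _).le).1 (hA δ hδ_pos)
  obtain ⟨u, -, hu, hu_card⟩ := (coveringNumber_le_ofReal_iff (Real.exp_pos _).le).1
    (hB (δ ^ (γ * β)⁻¹) (NNReal.rpow_pos hδ_pos))
  have hu_radius : ((δ ^ (γ * β)⁻¹ : ℝ≥0) : ℝ) ^ (-(γ * β * p)) = (δ : ℝ) ^ (-p) := by
    rw [NNReal.coe_rpow, ← Real.rpow_mul δ.coe_nonneg]
    congr 1
    field_simp
  have hcard : (t.card * u.card : ℝ) ≤ Real.exp ((A + B) * (δ : ℝ) ^ (-p)) := by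
    rw [hu_radius] at hu_card
    rw [add_mul, Real.exp_add]
    gcongr
  have hδ_rpow : (δ : ℝ) ^ (-p) = K ^ p * ε ^ (-p) := by
    rw [hδ, Real.div_rpow hε.le hK.le, Real.rpow_neg hK.le, div_inv_eq_mul, mul_comm]
  refine (bracketingEntropy_comp_le_log_mul hγ hβ hL hρ_meas hR_meas hR_nonneg hρ hF_hoelder htF ht
    hu (hδ ▸ hsize ε)).trans (ENNReal.ofReal_le_ofReal ?_)
  calc Real.log (t.card * u.card) ≤ (A + B) * (δ : ℝ) ^ (-p) := by
        rcases (show (0 : ℝ) ≤ t.card * u.card by positivity).eq_or_lt with hzero | hpos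
        · rw [← hzero, Real.log_zero]
          positivity
        · exact (Real.log_le_iff_le_exp hpos).2 hcard
    _ = (A + B) * K ^ p * ε ^ (-p) := by rw [hδ_rpow, mul_assoc]
    _ ≤ ((A + B) * K ^ p + 1) * ε ^ (-p) := by gcongr; linarith

end Composition

theorem lipschitzOnWith_log_Ici {χ : ℝ≥0} (hχ : 0 < χ) :
    LipschitzOnWith χ⁻¹ Real.log (Set.Ici (χ : ℝ)) := by
  have hpos {x : ℝ} (hx : x ∈ Set.Ici (χ : ℝ)) : 0 < x := (NNReal.coe_pos.2 hχ).trans_le hx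
  refine (convex_Ici _).lipschitzOnWith_of_nnnorm_deriv_le
    (fun x hx => Real.differentiableAt_log (hpos hx).ne') fun x hx => ?_
  rw [Real.deriv_log, nnnorm_inv]
  gcongr
  simpa [← NNReal.coe_le_coe, abs_of_pos (hpos hx)] using hx

end Stmt5

theorem stmt5_bracketing_entropy_of_logFstar_general
    {X : Type*} [PseudoMetricSpace X] [MeasurableSpace X] [OpensMeasurableSpace X]
    {T : Type*} [PseudoMetricSpace T] {V : Type*} [MeasurableSpace V] {μ : Measure V}
    [IsFiniteMeasure μ] {ρ : V → T → X} {R : V → ℝ} {F : Set (X → ℝ)} {γ β L p χ : ℝ}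
    (hγ : 0 < γ) (hβ : 0 < β) (hL : 0 ≤ L)
    (hT : Stmt5.HasEntropyGrowth (Set.univ : Set T) (γ * β * p))
    (hρ_meas : ∀ θ, Measurable fun v => ρ v θ)
    (hR_meas : Measurable R) (hR_nonneg : ∀ v, 0 ≤ R v) (hR_memLp : MemLp (fun v => R v ^ β) 2 μ)
    (hρ_hoelder : ∀ v θ θ', dist (ρ v θ') (ρ v θ) ≤ R v * dist θ' θ ^ γ)
    (hF : Stmt5.HasEntropyGrowth (UniformFun.ofFun '' F) p)
    (hF_hoelder : ∀ f ∈ F, ∀ x y, |f x - f y| ≤ L * dist x y ^ β)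
    (hχ : 0 < χ) (hF_lb : ∀ f ∈ F, ∀ x, χ ≤ f x) :
    ∃ C' : ℝ, 0 < C' ∧ ∀ ε : ℝ, 0 < ε →
      Stmt5.bracketingEntropy μ ε {g | ∃ θ : T, ∃ f ∈ F, g = fun v => Real.log (f (ρ v θ))} ≤
        ENNReal.ofReal (C' * ε ^ (-p)) := by
  lift χ to NNReal using hχ.le
  have hlog := Stmt5.lipschitzOnWith_log_Ici (NNReal.coe_pos.1 hχ)
  have hlogF_hoelder : ∀ h ∈ (Real.log ∘ ·) '' F, ∀ x y,
      |h x - h y| ≤ (χ : ℝ)⁻¹ * L * dist x y ^ β := by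
    rintro _ ⟨f, hf, rfl⟩ x y
    calc |Real.log (f x) - Real.log (f y)| ≤ (χ : ℝ)⁻¹ * |f x - f y| :=
          hlog.dist_le_mul _ (hF_lb f hf x) _ (hF_lb f hf y)
      _ ≤ (χ : ℝ)⁻¹ * (L * dist x y ^ β) := by gcongr; exact hF_hoelder f hf x y
      _ = (χ : ℝ)⁻¹ * L * dist x y ^ β := (mul_assoc _ _ _).symm
  simpa only [Set.exists_mem_image, Function.comp_apply] using
    Stmt5.exists_bracketingEntropy_comp_le hγ hβ (by positivity) hT hρ_meas hR_meas hR_nonneg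
      hR_memLp hρ_hoelder (hF.comp_lipschitzOnWith hlog hF_lb) hlogF_hoelder

/-- bracketing entropy bound for the logarithmic simulated class
`log F*`.
Let `Θ ⊆ ℝ^m` be non-empty compact, `(V,𝒱,μ)` a probability space, `Ω = (a,b)` a non-empty
bounded open interval, and `ρ : V × Θ → Ω` measurable in `v` and Hölder in `θ`:
`|ρ(v,θ') − ρ(v,θ)| ≤ R(v)‖θ'−θ‖^γ` with `R > 0` measurable.  Let `F` be a non-empty class
of functions on `Ω` that is (i) uniformly sup-norm bounded, (ii) uniformly `β`-Hölder with
constant `L`, with (iii) `∫ R^{2β} dμ < ∞`, and (iv) for all `ε > 0` coverable by at most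
`exp(C ε^{−1/s})` sup-norm balls of radius `ε` centered in `F`, where `s > 1/2`.  Then there
is `0 < C'' < ∞` with `H_[](ε, log F*, ‖·‖_{2,μ}) ≤ C'' ε^{−1/s}` for all `ε > 0`, where
`log F* = {log f(ρ(·,θ)) : θ ∈ Θ, f ∈ F}`; in addition to (i)–(iv), the members of `F` are
here assumed to be uniformly bounded below by some `χ > 0`. -/
theorem stmt5_bracketing_entropy_of_logFstar
    {m : ℕ} (a b : ℝ) (hab : a < b)
    (Θ : Set (EuclideanSpace ℝ (Fin m))) (hΘc : IsCompact Θ) (hΘne : Θ.Nonempty)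
    {V : Type*} [MeasurableSpace V] (μ : Measure V) [IsProbabilityMeasure μ]
    (ρ : V → Θ → Set.Ioo a b)
    (hρ_meas : ∀ θ : Θ, Measurable fun v => ρ v θ)
    (γ : ℝ) (hγ0 : 0 < γ) (hγ1 : γ ≤ 1)
    (R : V → ℝ) (hR_meas : Measurable R) (hR_pos : ∀ v, 0 < R v)
    (hρ_hoelder : ∀ v, ∀ θ θ' : Θ,
      |((ρ v θ' : ℝ)) - ((ρ v θ : ℝ))| ≤
        R v * ‖(θ' : EuclideanSpace ℝ (Fin m)) - (θ : EuclideanSpace ℝ (Fin m))‖ ^ γ)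
    (F : Set (Set.Ioo a b → ℝ)) (hFne : F.Nonempty)
    (M : ℝ) (hF_bdd : ∀ f ∈ F, ∀ x, |f x| ≤ M)
    (β L : ℝ) (hβ0 : 0 < β) (hβ1 : β ≤ 1) (hL : 0 < L)
    (hF_hoelder : ∀ f ∈ F, ∀ x y : Set.Ioo a b,
      |f x - f y| ≤ L * |(x : ℝ) - (y : ℝ)| ^ β)
    (hR_int : ∫⁻ v, ENNReal.ofReal (R v ^ (2 * β)) ∂μ < ⊤)
    (C s : ℝ) (hC : 0 < C) (hs : 1 / 2 < s)
    (hF_cover : ∀ ε : ℝ, 0 < ε → ∃ (n : ℕ) (c : Fin n → Set.Ioo a b → ℝ),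
      (n : ℝ) ≤ Real.exp (C * ε ^ (-(1 : ℝ) / s)) ∧ (∀ i, c i ∈ F) ∧
        ∀ f ∈ F, ∃ i, ∀ x, |f x - c i x| ≤ ε)
    (χ : ℝ) (hχ : 0 < χ) (hF_lb : ∀ f ∈ F, ∀ x, χ ≤ f x) :
    ∃ C' : ℝ, 0 < C' ∧ ∀ ε : ℝ, 0 < ε →
      Stmt5.bracketingEntropy μ ε
          {g : V → ℝ | ∃ θ : Θ, ∃ f ∈ F, g = fun v => Real.log (f (ρ v θ))} ≤
        ENNReal.ofReal (C' * ε ^ (-(1 : ℝ) / s)) := by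
  have hΘ := (Stmt5.hasEntropyGrowth_of_isBounded hΘc.isBounded
    (show 0 < γ * β * (1 / s) by positivity)).univ_subtype
  simp only [neg_div] at hF_cover ⊢
  exact stmt5_bracketing_entropy_of_logFstar_general hγ0 hβ0 hL.le hΘ hρ_meas hR_meas
    (fun v => (hR_pos v).le) (Stmt5.memLp_two_rpow hR_meas (fun v => (hR_pos v).le) hR_int)
    hρ_hoelder (Stmt5.hasEntropyGrowth_image_ofFun hC.le hF_cover) hF_hoelder hχ hF_lb
end

section
/- Let Ω be a non-empty bounded open interval in ℝ, Θ a non-empty compact subset of ℝ^m, (V,𝒱,μ) a probability space, and ρ : V × Θ → Ω measurable in its first argument and, for every v ∈ V, continuous in its second argument. Let 𝓕 be a non-empty set of non-negative bounded continuous real-valued functions on Ω whose elements are uniformly bounded away from 0, i.e., inf_{f∈𝓕} inf_{x∈Ω} f(x) > 0. Then the function L(θ,f) = ∫_V log f(ρ(v,θ)) dμ(v) is a real-valued continuous function on Θ × 𝓕, where 𝓕 is equipped with the sup-norm metric. -/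
open MeasureTheory

/-!
The map `(θ, f) ↦ ∫ v, log (f (ρ v θ)) ∂μ` is the composition of `(θ, f) ↦ (θ, log ∘ f)` with
`(θ, g) ↦ ∫ v, g (ρ v θ) ∂μ`. The former is continuous for uniform convergence at every `f` with
values in a compact subset of `(0, ∞)`, because `log` is uniformly continuous near such a set. The
latter is continuous on bounded continuous `g` by dominated convergence, since functions uniformly
close to `g` admit a common bound and evaluation is jointly continuous at continuous functions.
-/

section

open Filter Topology UniformFun UniformConvergence

section UniformSpace

variable {X E G : Type*} [UniformSpace E] [UniformSpace G]

theorem tendstoUniformly_toFun_nhds (g : X →ᵤ E) : TendstoUniformly toFun (toFun g) (𝓝 g) :=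
  UniformFun.tendsto_iff_tendstoUniformly.1 tendsto_id

theorem continuousAt_uniformFun_eval [TopologicalSpace X] {g : X →ᵤ E} {x : X}
    (hg : ContinuousAt (toFun g) x) :
    ContinuousAt (fun p : (X →ᵤ E) × X => toFun p.1 p.2) (g, x) :=
  (UniformFun.tendsto_iff_tendstoUniformly.1 continuousAt_fst).tendsto_comp hg continuousAt_snd

theorem continuousAt_uniformFun_postcomp_of_isCompact {K : Set E} (hK : IsCompact K) {φ : E → G}
    (hφ : ∀ y ∈ K, ContinuousAt φ y) {g : X →ᵤ E} (hg : ∀ x, toFun g x ∈ K) :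
    ContinuousAt (fun h : X →ᵤ E => ofFun (φ ∘ toFun h)) g := by
  refine UniformFun.tendsto_iff_tendstoUniformly.2 fun W hW => ?_
  have hφW : {p : E × E | p.1 ∈ K → (φ p.1, φ p.2) ∈ W} ∈ uniformity E :=
    hK.uniformContinuousAt_of_continuousAt φ hφ hW
  filter_upwards [tendstoUniformly_toFun_nhds g _ hφW] with h hh x
  exact hh x (hg x)

end UniformSpace

theorem eventually_norm_uniformFun_le {X E : Type*} [SeminormedAddCommGroup E] {g : X →ᵤ E}
    {C C' : ℝ} (hC : C < C') (hg : ∀ x, ‖toFun g x‖ ≤ C) :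
    ∀ᶠ h in 𝓝 g, ∀ x, ‖toFun h x‖ ≤ C' := by
  have hnear := Metric.tendstoUniformly_iff.1 (tendstoUniformly_toFun_nhds g) _ (sub_pos.2 hC)
  filter_upwards [hnear] with h hh x
  calc ‖toFun h x‖ ≤ ‖toFun g x‖ + ‖toFun h x - toFun g x‖ := norm_le_norm_add_norm_sub' _ _
    _ ≤ C + (C' - C) := add_le_add (hg x) (dist_eq_norm' (toFun g x) (toFun h x) ▸ (hh x).le)
    _ = C' := add_sub_cancel C C'

section Integral

/-- The bounded continuous maps, as a subset of the space `X →ᵤ E` of all maps, so that the ambient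
topology of uniform convergence restricts to that of the sup-norm. -/
def boundedContinuousMaps (X E : Type*) [TopologicalSpace X] [NormedAddCommGroup E] :
    Set (X →ᵤ E) :=
  {g | Continuous (toFun g) ∧ ∃ C : ℝ, ∀ x, ‖toFun g x‖ ≤ C}

variable {X E V T : Type*} [TopologicalSpace X] [MeasurableSpace X] [OpensMeasurableSpace X]
  [NormedAddCommGroup E] [SecondCountableTopologyEither X E] [MeasurableSpace V] {μ : Measure V}

theorem integrable_comp_of_mem_boundedContinuousMaps [IsFiniteMeasure μ] {g : X →ᵤ E}
    (hg : g ∈ boundedContinuousMaps X E) {ξ : V → X} (hξ : AEMeasurable ξ μ) :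
    Integrable (fun v => toFun g (ξ v)) μ :=
  let ⟨C, hC⟩ := hg.2
  .of_bound (hg.1.aestronglyMeasurable.comp_aemeasurable hξ) C (ae_of_all μ fun _ => hC _)

theorem continuousOn_integral_comp_boundedContinuousMaps [NormedSpace ℝ E] [IsFiniteMeasure μ]
    [TopologicalSpace T] [FirstCountableTopology T] {ρ : V → T → X}
    (hρ_meas : ∀ t, AEMeasurable (fun v => ρ v t) μ)
    (hρ_cont : ∀ t, ∀ᵐ v ∂μ, ContinuousAt (ρ v) t) :
    ContinuousOn (fun p : T × (X →ᵤ E) => ∫ v, toFun p.2 (ρ v p.1) ∂μ)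
      (Set.univ ×ˢ boundedContinuousMaps X E) := by
  rintro ⟨t, g⟩ ⟨-, hg_cont, C, hgC⟩
  have : FirstCountableTopology (X →ᵤ E) := UniformSpace.firstCountableTopology _
  refine continuousWithinAt_of_dominated (bound := fun _ => C + 1) ?_ ?_ (integrable_const _) ?_
  · filter_upwards [self_mem_nhdsWithin] with p hp
    exact (integrable_comp_of_mem_boundedContinuousMaps hp.2 (hρ_meas p.1)).aestronglyMeasurable
  · have hbound : ∀ᶠ p : T × (X →ᵤ E) in 𝓝 (t, g), ∀ x, ‖toFun p.2 x‖ ≤ C + 1 :=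
      continuousAt_snd.eventually (eventually_norm_uniformFun_le (lt_add_one C) hgC)
    filter_upwards [nhdsWithin_le_nhds hbound] with p hp
    exact ae_of_all μ fun v => hp (ρ v p.1)
  · filter_upwards [hρ_cont t] with v hv
    have hpair : ContinuousAt (fun p : T × (X →ᵤ E) => (p.2, ρ v p.1)) (t, g) :=
      continuousAt_snd.prodMk (hv.comp continuousAt_fst)
    have heval : ContinuousAt (fun q : (X →ᵤ E) × X => toFun q.1 q.2) (g, ρ v t) :=
      continuousAt_uniformFun_eval hg_cont.continuousAt
    exact (heval.comp (x := (t, g)) hpair).continuousWithinAt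

end Integral

section Log

/-- The bounded continuous real functions with a positive lower bound, on which `f ↦ log ∘ f` is
continuous for uniform convergence. The two bounds may depend on the function. -/
def posBoundedContinuousMaps (X : Type*) [TopologicalSpace X] : Set (X →ᵤ ℝ) :=
  {f | Continuous (toFun f) ∧ ∃ c M : ℝ, 0 < c ∧ ∀ x, toFun f x ∈ Set.Icc c M}

variable {X : Type*} [TopologicalSpace X]

theorem log_comp_mem_boundedContinuousMaps {f : X →ᵤ ℝ} (hf : f ∈ posBoundedContinuousMaps X) :
    ofFun (Real.log ∘ toFun f) ∈ boundedContinuousMaps X ℝ := by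
  obtain ⟨hf_cont, c, M, hc, hfcM⟩ := hf
  have hpos (x : X) : 0 < toFun f x := hc.trans_le (hfcM x).1
  refine ⟨hf_cont.log fun x => (hpos x).ne', max |Real.log c| |Real.log M|, fun x => ?_⟩
  exact abs_le_max_abs_abs (Real.log_le_log hc (hfcM x).1) (Real.log_le_log (hpos x) (hfcM x).2)

theorem continuousOn_log_comp :
    ContinuousOn (fun f : X →ᵤ ℝ => ofFun (Real.log ∘ toFun f)) (posBoundedContinuousMaps X) := by
  rintro f ⟨-, c, M, hc, hfcM⟩
  have hlog : ∀ y ∈ Set.Icc c M, ContinuousAt Real.log y := fun y hy =>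
    Real.continuousAt_log (hc.trans_le hy.1).ne'
  exact (continuousAt_uniformFun_postcomp_of_isCompact isCompact_Icc hlog hfcM).continuousWithinAt

end Log

theorem stmt8_continuity_of_L_general {T X V : Type*} [TopologicalSpace T]
    [FirstCountableTopology T] [TopologicalSpace X] [MeasurableSpace X] [OpensMeasurableSpace X]
    [MeasurableSpace V] (μ : Measure V) [IsFiniteMeasure μ] (ρ : V → T → X)
    (hρ_meas : ∀ t, AEMeasurable (fun v => ρ v t) μ)
    (hρ_cont : ∀ t, ∀ᵐ v ∂μ, ContinuousAt (ρ v) t)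
    (F : Set (X → ℝ)) (hF_cont : ∀ f ∈ F, Continuous f)
    (hF_bdd : ∀ f ∈ F, ∃ M : ℝ, ∀ x, f x ≤ M)
    (hF_lb : ∀ f ∈ F, ∃ c : ℝ, 0 < c ∧ ∀ x, c ≤ f x) :
    (∀ t, ∀ f ∈ F, Integrable (fun v => Real.log (f (ρ v t))) μ) ∧
      ContinuousOn (fun p : T × (X →ᵤ ℝ) => ∫ v, Real.log (toFun p.2 (ρ v p.1)) ∂μ)
        (Set.univ ×ˢ (ofFun '' F)) := by
  have hF : ∀ f ∈ F, ofFun f ∈ posBoundedContinuousMaps X := fun f hf =>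
    let ⟨M, hM⟩ := hF_bdd f hf
    let ⟨c, hc, hcf⟩ := hF_lb f hf
    ⟨hF_cont f hf, c, M, hc, fun x => ⟨hcf x, hM x⟩⟩
  refine ⟨fun t f hf => integrable_comp_of_mem_boundedContinuousMaps
    (log_comp_mem_boundedContinuousMaps (hF f hf)) (hρ_meas t), ?_⟩
  have hpostcomp : ContinuousOn
      (fun p : T × (X →ᵤ ℝ) => (p.1, (ofFun (Real.log ∘ toFun p.2) : X →ᵤ ℝ)))
      (Set.univ ×ˢ posBoundedContinuousMaps X) :=
    continuousOn_id.prodMap continuousOn_log_comp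
  exact ((continuousOn_integral_comp_boundedContinuousMaps hρ_meas hρ_cont).comp hpostcomp
    fun p hp => ⟨hp.1, log_comp_mem_boundedContinuousMaps hp.2⟩).mono
      (Set.prod_mono_right (Set.image_subset_iff.2 hF))

end

/-- joint continuity of the expected log-likelihood `L(θ,f)`.
Let `Ω = (a,b)` be a non-empty bounded open interval, `Θ ⊆ ℝ^m` non-empty compact,
`(V,𝒱,μ)` a probability space, and `ρ : V × Θ → Ω` measurable in its first and continuous
in its second argument.  Let `F` be a non-empty set of non-negative bounded continuous
real-valued functions on `Ω` uniformly bounded away from `0`.  Then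
`L(θ,f) = ∫_V log f(ρ(v,θ)) dμ(v)` is a real-valued (in particular the integrand is
integrable) continuous function on `Θ × F`, where `F` carries the sup-norm (uniform
convergence) topology. -/
theorem stmt8_continuity_of_L
    {m : ℕ} (a b : ℝ) (hab : a < b)
    (Θ : Set (EuclideanSpace ℝ (Fin m))) (hΘc : IsCompact Θ) (hΘne : Θ.Nonempty)
    {V : Type*} [MeasurableSpace V] (μ : Measure V) [IsProbabilityMeasure μ]
    (ρ : V → Θ → Set.Ioo a b)
    (hρ_meas : ∀ θ : Θ, Measurable fun v => ρ v θ)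
    (hρ_cont : ∀ v, Continuous (ρ v))
    (F : Set (Set.Ioo a b → ℝ)) (hFne : F.Nonempty)
    (hF_cont : ∀ f ∈ F, Continuous f)
    (hF_bdd : ∀ f ∈ F, ∃ M : ℝ, ∀ x, f x ≤ M)
    (hF_lb : ∃ c : ℝ, 0 < c ∧ ∀ f ∈ F, ∀ x, c ≤ f x) :
    (∀ θ : Θ, ∀ f ∈ F, Integrable (fun v => Real.log (f (ρ v θ))) μ) ∧
      ContinuousOn
        (fun p : Θ × UniformFun (Set.Ioo a b) ℝ =>
          ∫ v, Real.log (UniformFun.toFun p.2 (ρ v p.1)) ∂μ)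
        (Set.univ ×ˢ (UniformFun.ofFun '' F)) := by
  obtain ⟨c, hc, hcF⟩ := hF_lb
  exact stmt8_continuity_of_L_general μ ρ (fun θ => (hρ_meas θ).aemeasurable)
    (fun θ => ae_of_all μ fun v => (hρ_cont v).continuousAt) F hF_cont hF_bdd
    fun f hf => ⟨c, hc, hcF f hf⟩
end

section
/- Let Ω be a non-empty bounded open interval in ℝ and let p and q be bounded continuous probability densities on Ω with respect to Lebesgue measure λ (non-negative continuous functions with ∫_Ω p dλ = ∫_Ω q dλ = 1 and finite sup-norm). Let ℙ be the measure on Ω with density p. If q ≠ p (i.e., q(x) ≠ p(x) for some x ∈ Ω), then ∫_Ω log q dℙ < ∫_Ω log p dℙ, where ∫_Ω log q dℙ is a well-defined element of [−∞,∞) and ∫_Ω log p dℙ is finite. -/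
open MeasureTheory
open scoped ENNReal

/-- The extended-real-valued integral `∫ log f dℙ ∈ [−∞,∞]`, encoded as the difference of
the (luminous) integrals of the positive and negative parts of `log f`, with the convention
`log 0 = −∞` (so the negative part is `⊤` where `f` vanishes). -/
noncomputable def stmt11.extLogIntegral {α : Type*} [MeasurableSpace α]
    (P : Measure α) (f : α → ℝ) : EReal :=
  ((∫⁻ x, ENNReal.ofReal (Real.log (f x)) ∂P : ℝ≥0∞) : EReal) -
    ((∫⁻ x, (if f x = 0 then (⊤ : ℝ≥0∞) else ENNReal.ofReal (-(Real.log (f x)))) ∂P :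
      ℝ≥0∞) : EReal)

/-!
Pointwise, `p log q ≤ p log p + (q - p)`, strictly where `q ≠ p`: this is `y - 1 ≤ y log y` at
`y = p / q`. Integrating, and using `∫ q = ∫ p`, gives Gibbs' inequality `∫ p log q < ∫ p log p`
unless `q = p` almost everywhere, and for continuous `p`, `q` on an open set almost everywhere
means everywhere. If the negative part of `log q` is not `P`-integrable, the left-hand side is `-∞`.
-/

namespace stmt11

section PositiveAndNegativePart

variable {α : Type*} [MeasurableSpace α] {P : Measure α} {f : α → ℝ}

/-- The negative part of the logarithm with values in `[0, ∞]`, subject to the convention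
`log 0 = -∞`; Mathlib's `Real.log` has `Real.log 0 = 0`, so the value at `0` is set by hand.
It is the integrand of the negative part in `stmt11.extLogIntegral`. -/
noncomputable def negPartLog (y : ℝ) : ℝ≥0∞ :=
  if y = 0 then ⊤ else ENNReal.ofReal (-Real.log y)

theorem negPartLog_zero : negPartLog 0 = ⊤ := if_pos rfl

theorem negPartLog_of_ne_zero {y : ℝ} (hy : y ≠ 0) :
    negPartLog y = ENNReal.ofReal (-Real.log y) := if_neg hy

theorem measurable_negPartLog : Measurable negPartLog :=
  Measurable.ite (measurableSet_singleton 0) measurable_const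
    Real.measurable_log.neg.ennreal_ofReal

theorem ofReal_mul_negPartLog_le_one (y : ℝ) : ENNReal.ofReal y * negPartLog y ≤ 1 := by
  rcases le_or_gt y 0 with hy | hy
  · simp [ENNReal.ofReal_of_nonpos hy]
  · rw [negPartLog_of_ne_zero hy.ne', ← ENNReal.ofReal_mul hy.le, ENNReal.ofReal_le_one]
    linarith [Real.self_sub_one_le_mul_log hy.le]

theorem ofReal_log_le_enorm (y : ℝ) : ENNReal.ofReal (Real.log y) ≤ ‖y‖ₑ := by
  rw [← Real.log_abs, Real.enorm_eq_ofReal_abs]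
  exact ENNReal.ofReal_le_ofReal (Real.log_le_self (abs_nonneg y))

theorem lintegral_ofReal_log_lt_top (hf : Integrable f P) :
    ∫⁻ x, ENNReal.ofReal (Real.log (f x)) ∂P < ⊤ :=
  (lintegral_mono fun x => ofReal_log_le_enorm (f x)).trans_lt hf.hasFiniteIntegral

theorem integrable_of_lintegral_ofReal_lt_top (hf : AEMeasurable f P)
    (hpos : ∫⁻ x, ENNReal.ofReal (f x) ∂P < ⊤) (hneg : ∫⁻ x, ENNReal.ofReal (-f x) ∂P < ⊤) :
    Integrable f P := by
  refine ((integrable_toReal_of_lintegral_ne_top hf.ennreal_ofReal hpos.ne).sub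
    (integrable_toReal_of_lintegral_ne_top hf.neg.ennreal_ofReal hneg.ne)).congr
    (ae_of_all _ fun x => ?_)
  exact max_zero_sub_max_neg_zero_eq_self (f x)

theorem ae_ne_zero_of_lintegral_negPartLog_lt_top (hf : AEMeasurable f P)
    (hneg : ∫⁻ x, negPartLog (f x) ∂P < ⊤) : ∀ᵐ x ∂P, f x ≠ 0 := by
  filter_upwards [ae_lt_top' (measurable_negPartLog.comp_aemeasurable hf) hneg.ne] with x hx hfx
  exact hx.ne ((congrArg negPartLog hfx).trans negPartLog_zero)

theorem lintegral_negPartLog_eq (hf : ∀ᵐ x ∂P, f x ≠ 0) :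
    ∫⁻ x, negPartLog (f x) ∂P = ∫⁻ x, ENNReal.ofReal (-Real.log (f x)) ∂P :=
  lintegral_congr_ae (hf.mono fun _ => negPartLog_of_ne_zero)

theorem integrable_log (hf : AEMeasurable f P)
    (hpos : ∫⁻ x, ENNReal.ofReal (Real.log (f x)) ∂P < ⊤)
    (hneg : ∫⁻ x, negPartLog (f x) ∂P < ⊤) : Integrable (fun x => Real.log (f x)) P := by
  rw [lintegral_negPartLog_eq (ae_ne_zero_of_lintegral_negPartLog_lt_top hf hneg)] at hneg
  exact integrable_of_lintegral_ofReal_lt_top (Real.measurable_log.comp_aemeasurable hf) hpos hneg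

theorem extLogIntegral_eq_coe_integral_log (hf : AEMeasurable f P)
    (hpos : ∫⁻ x, ENNReal.ofReal (Real.log (f x)) ∂P < ⊤)
    (hneg : ∫⁻ x, negPartLog (f x) ∂P < ⊤) :
    extLogIntegral P f = ((∫ x, Real.log (f x) ∂P : ℝ) : EReal) := by
  have hf0 := ae_ne_zero_of_lintegral_negPartLog_lt_top hf hneg
  rw [integral_eq_lintegral_pos_part_sub_lintegral_neg_part (integrable_log hf hpos hneg),
    ← lintegral_negPartLog_eq hf0, EReal.coe_sub, EReal.coe_ennreal_toReal hpos.ne,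
    EReal.coe_ennreal_toReal hneg.ne]
  rfl

theorem extLogIntegral_eq_bot (hneg : ∫⁻ x, negPartLog (f x) ∂P = ⊤) :
    extLogIntegral P f = ⊥ := by
  change _ - ((∫⁻ x, negPartLog (f x) ∂P : ℝ≥0∞) : EReal) = ⊥
  rw [hneg, EReal.coe_ennreal_top, EReal.sub_top]

end PositiveAndNegativePart

section Density

variable {α : Type*} [MeasurableSpace α] {μ : Measure α} {p : α → ℝ}

theorem integrable_withDensity_of_le {f : α → ℝ} {M : ℝ} (hM : ∀ᵐ x ∂μ, p x ≤ M)
    (hf : Integrable f μ) : Integrable f (μ.withDensity fun x => ENNReal.ofReal (p x)) := by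
  refine hf.of_measure_le_smul (c := ENNReal.ofReal M) ENNReal.ofReal_ne_top ?_
  rw [← withDensity_const]
  exact withDensity_mono (hM.mono fun _ => ENNReal.ofReal_le_ofReal)

theorem lintegral_negPartLog_withDensity_le (hp : AEMeasurable p μ) :
    ∫⁻ x, negPartLog (p x) ∂(μ.withDensity fun x => ENNReal.ofReal (p x)) ≤ μ Set.univ := by
  have hneg : AEMeasurable (fun x => negPartLog (p x)) μ :=
    measurable_negPartLog.comp_aemeasurable hp
  rw [lintegral_withDensity_eq_lintegral_mul₀ hp.ennreal_ofReal hneg, ← lintegral_one]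
  exact lintegral_mono fun x => ofReal_mul_negPartLog_le_one (p x)

theorem ae_withDensity_ofReal_iff (hp : AEMeasurable p μ) (hp0 : ∀ᵐ x ∂μ, 0 ≤ p x)
    {r : α → Prop} :
    (∀ᵐ x ∂(μ.withDensity fun x => ENNReal.ofReal (p x)), r x) ↔ ∀ᵐ x ∂μ, p x ≠ 0 → r x := by
  rw [ae_withDensity_iff' hp.ennreal_ofReal]
  refine Filter.eventually_congr (hp0.mono fun x hx => imp_congr_left ?_)
  rw [Ne, ENNReal.ofReal_eq_zero, hx.ge_iff_eq']

theorem toReal_ofReal_smul_ae_eq_mul (hp0 : ∀ᵐ x ∂μ, 0 ≤ p x) (f : α → ℝ) :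
    (fun x => (ENNReal.ofReal (p x)).toReal • f x) =ᵐ[μ] fun x => p x * f x :=
  hp0.mono fun x hx => by simp only [ENNReal.toReal_ofReal hx, smul_eq_mul]

theorem integrable_withDensity_ofReal_iff (hp : AEMeasurable p μ) (hp0 : ∀ᵐ x ∂μ, 0 ≤ p x)
    {f : α → ℝ} :
    Integrable f (μ.withDensity fun x => ENNReal.ofReal (p x)) ↔
      Integrable (fun x => p x * f x) μ := by
  rw [integrable_withDensity_iff_integrable_smul₀' hp.ennreal_ofReal
    (ae_of_all _ fun _ => ENNReal.ofReal_lt_top)]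
  exact integrable_congr (toReal_ofReal_smul_ae_eq_mul hp0 f)

theorem integral_withDensity_ofReal (hp : AEMeasurable p μ) (hp0 : ∀ᵐ x ∂μ, 0 ≤ p x)
    (f : α → ℝ) :
    ∫ x, f x ∂(μ.withDensity fun x => ENNReal.ofReal (p x)) = ∫ x, p x * f x ∂μ := by
  rw [integral_withDensity_eq_integral_toReal_smul₀ hp.ennreal_ofReal
    (ae_of_all _ fun _ => ENNReal.ofReal_lt_top)]
  exact integral_congr_ae (toReal_ofReal_smul_ae_eq_mul hp0 f)

end Density

section Gibbs

theorem mul_log_lt_mul_log_self_add_sub {s t : ℝ} (hs : 0 ≤ s) (ht : 0 ≤ t)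
    (hts : t = 0 → s = 0) (hne : t ≠ s) : s * Real.log t < s * Real.log s + (t - s) := by
  have ht_ne : t ≠ 0 := fun h => hne (h.trans (hts h).symm)
  have ht_pos : 0 < t := ht.lt_of_ne' ht_ne
  rcases hs.eq_or_lt with rfl | hs_pos
  · simpa using ht_pos
  have hratio : s / t - 1 < s / t * Real.log (s / t) :=
    Real.self_sub_one_lt_mul_log (by positivity) fun h => hne ((div_eq_one_iff_eq ht_ne).1 h).symm
  have hscaled : s - t < s * (Real.log s - Real.log t) := by
    calc s - t = t * (s / t - 1) := by field_simp
      _ < t * (s / t * Real.log (s / t)) := mul_lt_mul_of_pos_left hratio ht_pos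
      _ = s * (Real.log s - Real.log t) := by
        rw [Real.log_div hs_pos.ne' ht_ne, ← mul_assoc, mul_div_cancel₀ s ht_ne]
  linarith

theorem integral_mul_log_lt_integral_mul_log_self {α : Type*} [MeasurableSpace α] {μ : Measure α}
    {p q : α → ℝ} (hp : Integrable p μ) (hq : Integrable q μ)
    (hp0 : ∀ᵐ x ∂μ, 0 ≤ p x) (hq0 : ∀ᵐ x ∂μ, 0 ≤ q x) (hqp : ∀ᵐ x ∂μ, q x = 0 → p x = 0)
    (hplogp : Integrable (fun x => p x * Real.log (p x)) μ)
    (hplogq : Integrable (fun x => p x * Real.log (q x)) μ)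
    (hmass : ∫ x, q x ∂μ ≤ ∫ x, p x ∂μ) (hne : ¬q =ᵐ[μ] p) :
    ∫ x, p x * Real.log (q x) ∂μ < ∫ x, p x * Real.log (p x) ∂μ := by
  have hlt : ∀ᵐ x ∂μ, q x ≠ p x →
      p x * Real.log (q x) < p x * Real.log (p x) + (q x - p x) := by
    filter_upwards [hp0, hq0, hqp] with x using mul_log_lt_mul_log_self_add_sub
  have hle : (fun x => p x * Real.log (q x)) ≤ᵐ[μ]
      fun x => p x * Real.log (p x) + (q x - p x) := by
    filter_upwards [hlt] with x hx
    rcases eq_or_ne (q x) (p x) with heq | hqpx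
    · simp only [heq, sub_self, add_zero, le_refl]
    · exact (hx hqpx).le
  have hdiff : Integrable (fun x => q x - p x) μ := hq.sub hp
  have hint : Integrable (fun x => p x * Real.log (p x) + (q x - p x)) μ := hplogp.add hdiff
  have hne_bound : ¬(fun x => p x * Real.log (q x)) =ᵐ[μ]
      fun x => p x * Real.log (p x) + (q x - p x) := fun heq => hne <| by
    filter_upwards [hlt, heq] with x hx hxeq
    exact not_not.1 fun hqpx => (hx hqpx).ne hxeq
  calc ∫ x, p x * Real.log (q x) ∂μ
      < ∫ x, p x * Real.log (p x) + (q x - p x) ∂μ :=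
        (integral_mono_ae hplogq hint hle).lt_of_ne
          (mt (integral_eq_iff_of_ae_le hplogq hint hle).1 hne_bound)
    _ = ∫ x, p x * Real.log (p x) ∂μ + (∫ x, q x ∂μ - ∫ x, p x ∂μ) := by
        rw [integral_add hplogp hdiff, integral_sub hq hp]
    _ ≤ ∫ x, p x * Real.log (p x) ∂μ := by linarith

theorem extLogIntegral_withDensity_lt {α : Type*} [MeasurableSpace α] {μ : Measure α}
    {p q : α → ℝ} (hp : Integrable p μ) (hq : Integrable q μ)
    (hp0 : ∀ᵐ x ∂μ, 0 ≤ p x) (hq0 : ∀ᵐ x ∂μ, 0 ≤ q x)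
    (hmass : ∫ x, q x ∂μ ≤ ∫ x, p x ∂μ) (hne : ¬q =ᵐ[μ] p) {P : Measure α}
    (hP : P = μ.withDensity fun x => ENNReal.ofReal (p x))
    (hq_pos : ∫⁻ x, ENNReal.ofReal (Real.log (q x)) ∂P < ⊤)
    (hp_pos : ∫⁻ x, ENNReal.ofReal (Real.log (p x)) ∂P < ⊤)
    (hp_neg : ∫⁻ x, negPartLog (p x) ∂P < ⊤) :
    extLogIntegral P q < extLogIntegral P p := by
  have hPμ : P ≪ μ := hP ▸ withDensity_absolutelyContinuous _ _
  have hpP : AEMeasurable p P := hp.aemeasurable.mono_ac hPμ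
  have hqP : AEMeasurable q P := hq.aemeasurable.mono_ac hPμ
  rw [extLogIntegral_eq_coe_integral_log hpP hp_pos hp_neg]
  rcases eq_top_or_lt_top (∫⁻ x, negPartLog (q x) ∂P) with hq_neg | hq_neg
  · rw [extLogIntegral_eq_bot hq_neg]
    exact EReal.bot_lt_coe _
  have hlogp := integrable_log hpP hp_pos hp_neg
  have hlogq := integrable_log hqP hq_pos hq_neg
  have hq_ne := ae_ne_zero_of_lintegral_negPartLog_lt_top hqP hq_neg
  rw [extLogIntegral_eq_coe_integral_log hqP hq_pos hq_neg, EReal.coe_lt_coe_iff]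
  subst hP
  rw [integrable_withDensity_ofReal_iff hp.aemeasurable hp0] at hlogp hlogq
  rw [ae_withDensity_ofReal_iff hp.aemeasurable hp0] at hq_ne
  simp only [integral_withDensity_ofReal hp.aemeasurable hp0]
  exact integral_mul_log_lt_integral_mul_log_self hp hq hp0 hq0
    (hq_ne.mono fun _ => not_imp_not.1) hlogp hlogq hmass hne

end Gibbs

end stmt11

theorem stmt11_true_density_unique_maximizer_general {X : Type*} [TopologicalSpace X]
    [MeasurableSpace X] [OpensMeasurableSpace X] (μ : Measure X) [μ.IsOpenPosMeasure]
    {U : Set X} (hU : IsOpen U) (hμU : μ U < ⊤) (p q : X → ℝ)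
    (hp_cont : ContinuousOn p U) (hq_cont : ContinuousOn q U)
    (hp_nonneg : ∀ x ∈ U, 0 ≤ p x) (hq_nonneg : ∀ x ∈ U, 0 ≤ q x)
    (hp_bdd : ∃ M : ℝ, ∀ x ∈ U, p x ≤ M) (hq_int : IntegrableOn q U μ)
    (hmass : ∫ x in U, q x ∂μ ≤ ∫ x in U, p x ∂μ) (hne : ∃ x ∈ U, q x ≠ p x)
    (P : Measure X) (hP : P = (μ.restrict U).withDensity fun x => ENNReal.ofReal (p x)) :
    (∫⁻ x, ENNReal.ofReal (Real.log (q x)) ∂P < ⊤) ∧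
      (∫⁻ x, ENNReal.ofReal (Real.log (p x)) ∂P < ⊤) ∧
      (∫⁻ x, (if p x = 0 then (⊤ : ℝ≥0∞) else ENNReal.ofReal (-(Real.log (p x)))) ∂P < ⊤) ∧
      stmt11.extLogIntegral P q < stmt11.extLogIntegral P p := by
  obtain ⟨M, hM⟩ := hp_bdd
  have hp_meas : AEMeasurable p (μ.restrict U) := hp_cont.aemeasurable hU.measurableSet
  have hp0 := ae_restrict_of_forall_mem (μ := μ) hU.measurableSet hp_nonneg
  have hq0 := ae_restrict_of_forall_mem (μ := μ) hU.measurableSet hq_nonneg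
  have hpM := ae_restrict_of_forall_mem (μ := μ) hU.measurableSet hM
  have hp_int : IntegrableOn p U μ := .of_bound hμU hp_meas.aestronglyMeasurable M <| by
    filter_upwards [hp0, hpM] with x hx hxM using (Real.norm_of_nonneg hx).trans_le hxM
  have hne_ae : ¬q =ᵐ[μ.restrict U] p := fun hae =>
    let ⟨_, hx, hqp⟩ := hne
    hqp (Measure.eqOn_open_of_ae_eq hae hU hq_cont hp_cont hx)
  have hq_pos : ∫⁻ x, ENNReal.ofReal (Real.log (q x)) ∂P < ⊤ :=
    hP ▸ stmt11.lintegral_ofReal_log_lt_top (stmt11.integrable_withDensity_of_le hpM hq_int)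
  have hp_pos : ∫⁻ x, ENNReal.ofReal (Real.log (p x)) ∂P < ⊤ :=
    hP ▸ stmt11.lintegral_ofReal_log_lt_top (stmt11.integrable_withDensity_of_le hpM hp_int)
  have hp_neg : ∫⁻ x, stmt11.negPartLog (p x) ∂P < ⊤ :=
    hP ▸ (stmt11.lintegral_negPartLog_withDensity_le hp_meas).trans_lt
      (Measure.restrict_apply_univ U ▸ hμU)
  exact ⟨hq_pos, hp_pos, hp_neg,
    stmt11.extLogIntegral_withDensity_lt hp_int hq_int hp0 hq0 hmass hne_ae hP hq_pos hp_pos hp_neg⟩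

/-- the true density is the unique maximizer of the expected
log-likelihood.  Let `Ω = (a,b)` be a non-empty bounded open interval, `p, q` bounded
continuous probability densities on `Ω` w.r.t. Lebesgue measure, and `ℙ` the measure with
density `p`.  If `q ≠ p` somewhere on `Ω`, then `∫ log q dℙ < ∫ log p dℙ`, where both sides
are well-defined elements of `[−∞,∞)` (the positive parts are finite) and the right-hand
side is finite. -/
theorem stmt11_true_density_unique_maximizer
    (a b : ℝ) (hab : a < b)
    (p q : ℝ → ℝ)
    (hp_cont : ContinuousOn p (Set.Ioo a b)) (hq_cont : ContinuousOn q (Set.Ioo a b))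
    (hp_nonneg : ∀ x ∈ Set.Ioo a b, 0 ≤ p x) (hq_nonneg : ∀ x ∈ Set.Ioo a b, 0 ≤ q x)
    (hp_bdd : ∃ M : ℝ, ∀ x ∈ Set.Ioo a b, p x ≤ M)
    (hq_bdd : ∃ M : ℝ, ∀ x ∈ Set.Ioo a b, q x ≤ M)
    (hp_int : ∫ x in Set.Ioo a b, p x = 1) (hq_int : ∫ x in Set.Ioo a b, q x = 1)
    (hne : ∃ x ∈ Set.Ioo a b, q x ≠ p x)
    (P : Measure ℝ)
    (hP : P = (volume.restrict (Set.Ioo a b)).withDensity fun x => ENNReal.ofReal (p x)) :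
    (∫⁻ x, ENNReal.ofReal (Real.log (q x)) ∂P < ⊤) ∧
      (∫⁻ x, ENNReal.ofReal (Real.log (p x)) ∂P < ⊤) ∧
      (∫⁻ x, (if p x = 0 then (⊤ : ℝ≥0∞) else ENNReal.ofReal (-(Real.log (p x)))) ∂P < ⊤) ∧
      stmt11.extLogIntegral P q < stmt11.extLogIntegral P p :=
  stmt11_true_density_unique_maximizer_general volume isOpen_Ioo measure_Ioo_lt_top p q
    hp_cont hq_cont hp_nonneg hq_nonneg hp_bdd (integrable_of_integral_eq_one hq_int)
    (hq_int.trans hp_int.symm).le hne P hP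
end

section
/- Let Ω be a non-empty bounded open interval in ℝ with Lebesgue measure λ, and let 0 < ζ ≤ M < ∞. Let p and q be Borel-measurable probability densities on Ω satisfying ζ ≤ p(x) ≤ M and ζ ≤ q(x) ≤ M for all x ∈ Ω. Then ∫_Ω q · log(p/q) dλ ≤ −(ζ/(2M²)) · ∫_Ω (p − q)² dλ. -/
open MeasureTheory

/-!
On `(0, M]` the second derivative of `log` is at most `-1 / M ^ 2`, so `log` is strongly concave
there and lies below its tangent at `v` by at least `(u - v) ^ 2 / (2 * M ^ 2)`. Taking `u = p x`,
`v = q x` and multiplying by `q x`, the tangent term becomes `p x - q x`, whose integral vanishes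
because `p` and `q` have the same mass.
-/

open Set Filter
open scoped Topology

theorem le_add_sub_of_uniformConcaveOn_of_hasLineDerivAt
    {E : Type*} [NormedAddCommGroup E] [NormedSpace ℝ E] {s : Set E} {φ : ℝ → ℝ} {f : E → ℝ}
    {x y : E} {f' : ℝ} (hf : UniformConcaveOn s φ f) (hx : x ∈ s) (hy : y ∈ s)
    (hf' : HasLineDerivAt ℝ f f' x (y - x)) :
    f y ≤ f x + f' - φ ‖y - x‖ := by
  have slope_tendsto := hf'.tendsto_slope_zero_right
  have bound_tendsto : Tendsto (fun t : ℝ => f y - f x + (1 - t) * φ ‖y - x‖) (𝓝[>] 0)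
      (𝓝 (f y - f x + (1 - 0) * φ ‖y - x‖)) :=
    (Continuous.tendsto (by fun_prop) 0).mono_left nhdsWithin_le_nhds
  have bound_le_slope : ∀ᶠ t : ℝ in 𝓝[>] 0,
      f y - f x + (1 - t) * φ ‖y - x‖ ≤ t⁻¹ • (f (x + t • (y - x)) - f x) := by
    filter_upwards [Ioo_mem_nhdsGT zero_lt_one] with t ⟨ht_pos, ht_lt⟩
    have chord := hf.2 hy hx ht_pos.le (sub_pos.2 ht_lt).le (add_sub_cancel t 1)
    have point_eq : t • y + (1 - t) • x = x + t • (y - x) := by module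
    rw [point_eq] at chord
    simp only [smul_eq_mul] at chord ⊢
    rw [inv_mul_eq_div, le_div_iff₀ ht_pos]
    linarith
  linarith [le_of_tendsto_of_tendsto bound_tendsto slope_tendsto bound_le_slope]

theorem strongConcaveOn_of_hasDerivWithinAt2_le {D : Set ℝ} (hD : Convex ℝ D) {f f' f'' : ℝ → ℝ}
    {m : ℝ} (hf : ContinuousOn f D)
    (hf' : ∀ x ∈ interior D, HasDerivWithinAt f (f' x) (interior D) x)
    (hf'' : ∀ x ∈ interior D, HasDerivWithinAt f' (f'' x) (interior D) x)
    (hf''_le : ∀ x ∈ interior D, f'' x ≤ -m) : StrongConcaveOn D m f := by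
  simp only [strongConcaveOn_iff_convex, Real.norm_eq_abs, sq_abs]
  refine concaveOn_of_hasDerivWithinAt2_nonpos (f' := fun x => f' x + m * x)
    (f'' := fun x => f'' x + m) hD (by fun_prop) (fun x hx => ?_) (fun x hx => ?_)
    (fun x hx => by linarith [hf''_le x hx])
  · refine ((hf' x hx).add ((hasDerivWithinAt_id x _).pow 2 |>.const_mul (m / 2))).congr_deriv ?_
    simp only [id]
    ring
  · simpa only [mul_one, id] using! (hf'' x hx).add ((hasDerivWithinAt_id x _).const_mul m)

theorem strongConcaveOn_log_Ioc (M : ℝ) : StrongConcaveOn (Ioc 0 M) (M ^ 2)⁻¹ Real.log := by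
  refine strongConcaveOn_of_hasDerivWithinAt2_le (f' := fun x => x⁻¹)
    (f'' := fun x => -(x ^ 2)⁻¹) (convex_Ioc 0 M)
    (Real.continuousOn_log.mono fun x hx => hx.1.ne') ?_ ?_ ?_ <;>
    rw [interior_Ioc] <;> rintro x ⟨hx_pos, hx_lt⟩
  · exact (Real.hasDerivAt_log hx_pos.ne').hasDerivWithinAt
  · exact (hasDerivAt_inv hx_pos.ne').hasDerivWithinAt
  · gcongr

theorem mul_log_div_le_sub_sub_sq {M u v : ℝ} (hu : u ∈ Ioc 0 M) (hv : v ∈ Ioc 0 M) :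
    v * Real.log (u / v) ≤ (u - v) - v / (2 * M ^ 2) * (u - v) ^ 2 := by
  have log_hasLineDerivAt : HasLineDerivAt ℝ Real.log ((u - v) / v) v (u - v) := by
    simpa [div_eq_mul_inv] using
      (Real.hasDerivAt_log hv.1.ne').hasFDerivAt.hasLineDerivAt (u - v)
  have log_le := le_add_sub_of_uniformConcaveOn_of_hasLineDerivAt
    (strongConcaveOn_log_Ioc M) hv hu log_hasLineDerivAt
  rw [Real.norm_eq_abs, sq_abs] at log_le
  calc v * Real.log (u / v) = v * (Real.log u - Real.log v) := by
        rw [Real.log_div hu.1.ne' hv.1.ne']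
    _ ≤ v * ((u - v) / v - (M ^ 2)⁻¹ / 2 * (u - v) ^ 2) :=
        mul_le_mul_of_nonneg_left (by linarith) hv.1.le
    _ = (u - v) - v / (2 * M ^ 2) * (u - v) ^ 2 := by
        rw [mul_sub, mul_div_cancel₀ _ hv.1.ne']
        ring

section

variable {α : Type*} {mα : MeasurableSpace α} {μ : Measure α} {p q : α → ℝ}

theorem integrable_mul_log_div_of_le_mul {C : ℝ} (hp : Integrable p μ) (hq : Integrable q μ)
    (hp_pos : ∀ᵐ x ∂μ, 0 < p x) (hq_pos : ∀ᵐ x ∂μ, 0 < q x) (hqp : ∀ᵐ x ∂μ, q x ≤ C * p x) :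
    Integrable (fun x => q x * Real.log (p x / q x)) μ := by
  have ratio_aemeasurable : AEMeasurable (fun x => q x / p x) μ :=
    hq.aemeasurable.div hp.aemeasurable
  have lower_integrable : Integrable (fun x => q x / p x * (p x - q x)) μ := by
    refine (hp.sub hq).bdd_mul (c := C) ratio_aemeasurable.aestronglyMeasurable ?_
    filter_upwards [hp_pos, hq_pos, hqp] with x hpx hqx hqpx
    rw [Real.norm_of_nonneg (by positivity)]
    exact (div_le_iff₀ hpx).2 hqpx
  refine integrable_of_le_of_le
    (hq.aemeasurable.mul (hp.aemeasurable.div hq.aemeasurable).log).aestronglyMeasurable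
    ?_ ?_ lower_integrable (hp.sub hq)
  · filter_upwards [hp_pos, hq_pos] with x hpx hqx
    calc q x / p x * (p x - q x) = q x * (1 - (p x / q x)⁻¹) := by field_simp
      _ ≤ q x * Real.log (p x / q x) := by
        gcongr
        exact Real.one_sub_inv_le_log_of_pos (div_pos hpx hqx)
  · filter_upwards [hp_pos, hq_pos] with x hpx hqx
    calc q x * Real.log (p x / q x) ≤ q x * (p x / q x - 1) := by
          gcongr
          exact Real.log_le_sub_one_of_pos (div_pos hpx hqx)
      _ = p x - q x := by field_simp

theorem stmt12_quantitative_gibbs_general {ζ M : ℝ} (hp : Integrable p μ) (hq : Integrable q μ)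
    (hlog : Integrable (fun x => q x * Real.log (p x / q x)) μ)
    (hp_mem : ∀ᵐ x ∂μ, p x ∈ Ioc 0 M) (hq_mem : ∀ᵐ x ∂μ, q x ∈ Ioc 0 M)
    (hq_ge : ∀ᵐ x ∂μ, ζ ≤ q x) (hpq : ∫ x, p x ∂μ ≤ ∫ x, q x ∂μ) :
    ∫ x, q x * Real.log (p x / q x) ∂μ ≤ -(ζ / (2 * M ^ 2)) * ∫ x, (p x - q x) ^ 2 ∂μ := by
  have hsub : Integrable (fun x => p x - q x) μ := hp.sub hq
  have abs_sub_le : ∀ᵐ x ∂μ, |p x - q x| ≤ M := by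
    filter_upwards [hp_mem, hq_mem] with x hpx hqx
    exact abs_sub_le_of_nonneg_of_le hpx.1.le hpx.2 hqx.1.le hqx.2
  have hsq : Integrable (fun x => ζ / (2 * M ^ 2) * (p x - q x) ^ 2) μ := by
    simp only [sq (_ - _)]
    exact (hsub.bdd_mul hsub.aestronglyMeasurable abs_sub_le).const_mul _
  have pointwise : ∀ᵐ x ∂μ, q x * Real.log (p x / q x) ≤
      (p x - q x) - ζ / (2 * M ^ 2) * (p x - q x) ^ 2 := by
    filter_upwards [hp_mem, hq_mem, hq_ge] with x hpx hqx hζq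
    refine (mul_log_div_le_sub_sub_sq hpx hqx).trans ?_
    gcongr
  calc ∫ x, q x * Real.log (p x / q x) ∂μ
      ≤ ∫ x, (p x - q x) - ζ / (2 * M ^ 2) * (p x - q x) ^ 2 ∂μ :=
        integral_mono_ae hlog (hsub.sub hsq) pointwise
    _ = (∫ x, p x ∂μ) - (∫ x, q x ∂μ) - ζ / (2 * M ^ 2) * ∫ x, (p x - q x) ^ 2 ∂μ := by
        rw [integral_sub hsub hsq, integral_sub hp hq, integral_const_mul]
    _ ≤ -(ζ / (2 * M ^ 2)) * ∫ x, (p x - q x) ^ 2 ∂μ := by linarith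

end

/-- quantitative Gibbs inequality.
Let `Ω = (a,b)` be a non-empty bounded open interval with Lebesgue measure, `0 < ζ ≤ M < ∞`,
and let `p, q` be Borel probability densities on `Ω` with `ζ ≤ p ≤ M` and `ζ ≤ q ≤ M` on `Ω`.
Then `∫_Ω q log(p/q) dλ ≤ −(ζ/(2M²)) ∫_Ω (p−q)² dλ`. -/
theorem stmt12_quantitative_gibbs
    (a b : ℝ) (hab : a < b) (ζ M : ℝ) (hζ : 0 < ζ) (hζM : ζ ≤ M)
    (p q : ℝ → ℝ) (hp_meas : Measurable p) (hq_meas : Measurable q)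
    (hp_lb : ∀ x ∈ Set.Ioo a b, ζ ≤ p x) (hp_ub : ∀ x ∈ Set.Ioo a b, p x ≤ M)
    (hq_lb : ∀ x ∈ Set.Ioo a b, ζ ≤ q x) (hq_ub : ∀ x ∈ Set.Ioo a b, q x ≤ M)
    (hp_int : ∫ x in Set.Ioo a b, p x = 1) (hq_int : ∫ x in Set.Ioo a b, q x = 1) :
    ∫ x in Set.Ioo a b, q x * Real.log (p x / q x) ≤
      -(ζ / (2 * M ^ 2)) * ∫ x in Set.Ioo a b, (p x - q x) ^ 2 := by
  have ae_of_forall {P : ℝ → Prop} (h : ∀ x ∈ Ioo a b, P x) :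
      ∀ᵐ x ∂volume.restrict (Ioo a b), P x := ae_restrict_of_forall_mem measurableSet_Ioo h
  have hp := integrable_of_integral_eq_one hp_int
  have hq := integrable_of_integral_eq_one hq_int
  have p_pos x (hx : x ∈ Ioo a b) : 0 < p x := hζ.trans_le (hp_lb x hx)
  have q_pos x (hx : x ∈ Ioo a b) : 0 < q x := hζ.trans_le (hq_lb x hx)
  have q_le_mul_p x (hx : x ∈ Ioo a b) : q x ≤ M / ζ * p x :=
    calc q x ≤ M / ζ * ζ := by rw [div_mul_cancel₀ M hζ.ne']; exact hq_ub x hx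
      _ ≤ M / ζ * p x := mul_le_mul_of_nonneg_left (hp_lb x hx) (by positivity [hζ.trans_le hζM])
  have hlog := integrable_mul_log_div_of_le_mul hp hq (ae_of_forall p_pos) (ae_of_forall q_pos)
    (ae_of_forall q_le_mul_p)
  exact stmt12_quantitative_gibbs_general hp hq hlog
    (ae_of_forall fun x hx => ⟨p_pos x hx, hp_ub x hx⟩)
    (ae_of_forall fun x hx => ⟨q_pos x hx, hq_ub x hx⟩)
    (ae_of_forall hq_lb) (hp_int.trans hq_int.symm).le
end

section
/- Let Ω be a non-empty bounded open interval in ℝ with Lebesgue measure λ, Θ a non-empty compact subset of ℝ^m, (V,𝒱,μ) a probability space, and ρ : V × Θ → Ω measurable in its first argument and, for every v ∈ V, continuous in its second argument. Let 𝒫 be a set of continuous probability densities on Ω that is compact with respect to the sup-norm metric, and suppose that for every θ ∈ Θ the image measure of μ under ρ(·,θ) has a density p_θ ∈ 𝒫 with respect to λ. Then for every x ∈ Ω, the map θ ↦ p_θ(x) is continuous on Θ. -/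
open MeasureTheory
open scoped ENNReal

/-!
Weak convergence is coarser than pointwise convergence of probability densities: Fatou's lemma
gives lower semicontinuity of the mass of every open set, which is the portmanteau criterion.
A continuous density is determined by its law, so on a compact set of densities the map sending
a density to its law is a closed embedding into the Hausdorff space of probability measures.
Since the law of `ρ(·,θ)` depends continuously on `θ` by dominated convergence, so does its
density.
-/

open Filter Topology

section WeakConvergence

variable {Ω : Type*} [TopologicalSpace Ω] [MeasurableSpace Ω] [OpensMeasurableSpace Ω]

theorem tendsto_probabilityMeasure_of_ae_tendsto_density {ι : Type*} {l : Filter ι}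
    [l.IsCountablyGenerated] {ν : Measure Ω} {f : ι → Ω → ℝ≥0∞} {g : Ω → ℝ≥0∞}
    {P : ι → ProbabilityMeasure Ω} {Q : ProbabilityMeasure Ω}
    (hf : ∀ i, AEMeasurable (f i) ν)
    (hP : ∀ i, (P i : Measure Ω) = ν.withDensity (f i))
    (hQ : (Q : Measure Ω) = ν.withDensity g)
    (hfg : ∀ᵐ x ∂ν, Tendsto (fun i => f i x) l (𝓝 (g x))) :
    Tendsto P l (𝓝 Q) := by
  rcases l.eq_or_neBot with rfl | _
  · exact tendsto_bot
  refine tendsto_of_forall_isOpen_le_liminf' fun G hG => ?_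
  simp only [hP, hQ, withDensity_apply _ hG.measurableSet]
  calc ∫⁻ x in G, g x ∂ν
      = ∫⁻ x in G, liminf (fun i => f i x) l ∂ν :=
        lintegral_congr_ae <| ae_restrict_of_ae <| hfg.mono fun _ hx => hx.liminf_eq.symm
    _ ≤ liminf (fun i => ∫⁻ x in G, f i x ∂ν) l :=
        lintegral_liminf_le' fun i => (hf i).restrict

theorem continuous_probabilityMeasure_map {Θ V : Type*} [TopologicalSpace Θ]
    [FirstCountableTopology Θ] [MeasurableSpace V] {μ : Measure V} [IsProbabilityMeasure μ]
    {ρ : V → Θ → Ω} {P : Θ → ProbabilityMeasure Ω}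
    (hρ_meas : ∀ θ, AEMeasurable (fun v => ρ v θ) μ)
    (hρ_cont : ∀ θ, ∀ᵐ v ∂μ, ContinuousAt (ρ v) θ)
    (hP : ∀ θ, (P θ : Measure Ω) = μ.map fun v => ρ v θ) :
    Continuous P := by
  obtain rfl : P = fun θ => ⟨μ.map fun v => ρ v θ, Measure.isProbabilityMeasure_map (hρ_meas θ)⟩ :=
    funext fun θ => Subtype.ext (hP θ)
  exact continuous_iff_continuousAt.2 fun θ =>
    (tendstoInDistribution_of_ae_tendsto hρ_meas (hρ_meas θ) (hρ_cont θ)).tendsto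

end WeakConvergence

/-- Continuous probability densities `q` with respect to a reference measure `ν`. They are
real-valued, so that the sup-norm applies, and enter integrals through `ENNReal.ofReal`. -/
structure IsContinuousDensity {Ω : Type*} [TopologicalSpace Ω] [MeasurableSpace Ω]
    (ν : Measure Ω) (q : Ω → ℝ) : Prop where
  continuous : Continuous q
  nonneg : ∀ x, 0 ≤ q x
  lintegral_eq_one : ∫⁻ x, ENNReal.ofReal (q x) ∂ν = 1

namespace IsContinuousDensity

variable {Ω : Type*} [TopologicalSpace Ω] [MeasurableSpace Ω] {ν : Measure Ω} {q r : Ω → ℝ}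

/-- The law with density `q`, as a point of the space of probability measures with its topology
of weak convergence. -/
noncomputable def law (hq : IsContinuousDensity ν q) : ProbabilityMeasure Ω :=
  ⟨ν.withDensity fun x => ENNReal.ofReal (q x),
    ⟨by rw [withDensity_apply _ .univ, setLIntegral_univ, hq.lintegral_eq_one]⟩⟩

theorem toMeasure_law (hq : IsContinuousDensity ν q) :
    (hq.law : Measure Ω) = ν.withDensity fun x => ENNReal.ofReal (q x) :=
  rfl

section OpensMeasurableSpace

variable [OpensMeasurableSpace Ω]

theorem aemeasurable_ofReal (hq : IsContinuousDensity ν q) :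
    AEMeasurable (fun x => ENNReal.ofReal (q x)) ν :=
  hq.continuous.measurable.ennreal_ofReal.aemeasurable

theorem eq_of_law_eq [ν.IsOpenPosMeasure] (hq : IsContinuousDensity ν q)
    (hr : IsContinuousDensity ν r) (h : hq.law = hr.law) : q = r := by
  have hqr : (fun x => ENNReal.ofReal (q x)) =ᵐ[ν] fun x => ENNReal.ofReal (r x) :=
    (withDensity_eq_iff hq.aemeasurable_ofReal hr.aemeasurable_ofReal
      (hq.lintegral_eq_one ▸ ENNReal.one_ne_top)).1 (congrArg Subtype.val h)
  refine (hq.continuous.ae_eq_iff_eq ν hr.continuous).1 (hqr.mono fun x hx => ?_)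
  exact (ENNReal.ofReal_eq_ofReal_iff (hq.nonneg x) (hr.nonneg x)).1 hx

theorem continuous_law {K : Type*} [TopologicalSpace K] [FirstCountableTopology K]
    {d : K → Ω → ℝ} (hd : ∀ k, IsContinuousDensity ν (d k)) (hd_cont : Continuous d) :
    Continuous fun k => (hd k).law :=
  continuous_iff_continuousAt.2 fun k =>
    tendsto_probabilityMeasure_of_ae_tendsto_density (fun j => (hd j).aemeasurable_ofReal)
      (fun j => (hd j).toMeasure_law) (hd k).toMeasure_law <| .of_forall fun x =>
        ENNReal.tendsto_ofReal ((continuous_apply x).comp hd_cont).continuousAt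

end OpensMeasurableSpace

theorem isClosedEmbedding_law [BorelSpace Ω] [HasOuterApproxClosed Ω] [ν.IsOpenPosMeasure]
    {K : Type*} [TopologicalSpace K] [FirstCountableTopology K] [CompactSpace K]
    {d : K → Ω → ℝ} (hd : ∀ k, IsContinuousDensity ν (d k)) (hd_cont : Continuous d)
    (hd_inj : Function.Injective d) :
    IsClosedEmbedding fun k => (hd k).law :=
  (continuous_law hd hd_cont).isClosedEmbedding fun j k h =>
    hd_inj ((hd j).eq_of_law_eq (hd k) h)

end IsContinuousDensity

theorem stmt15_continuity_of_parametrization_general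
    {Ω Θ V : Type*} [TopologicalSpace Ω] [MeasurableSpace Ω] [BorelSpace Ω]
    [HasOuterApproxClosed Ω] (ν : Measure Ω) [ν.IsOpenPosMeasure]
    [TopologicalSpace Θ] [FirstCountableTopology Θ]
    [MeasurableSpace V] (μ : Measure V) [IsProbabilityMeasure μ] (ρ : V → Θ → Ω)
    (hρ_meas : ∀ θ, AEMeasurable (fun v => ρ v θ) μ)
    (hρ_cont : ∀ θ, ∀ᵐ v ∂μ, ContinuousAt (ρ v) θ)
    (Pset : Set (Ω → ℝ)) (hPset : ∀ q ∈ Pset, IsContinuousDensity ν q)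
    (hPset_cpt : IsCompact (UniformFun.ofFun '' Pset : Set (UniformFun Ω ℝ)))
    (p : Θ → Ω → ℝ) (hp_mem : ∀ θ, p θ ∈ Pset)
    (hp_dens : ∀ θ, μ.map (fun v => ρ v θ) = ν.withDensity fun x => ENNReal.ofReal (p θ x)) :
    Continuous fun θ => UniformFun.ofFun (p θ) := by
  let K : Set (UniformFun Ω ℝ) := UniformFun.ofFun '' Pset
  have : CompactSpace K := isCompact_iff_compactSpace.1 hPset_cpt
  let d (k : K) : Ω → ℝ := UniformFun.toFun k.1
  have hd (k : K) : IsContinuousDensity ν (d k) := by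
    obtain ⟨_, q, hq, rfl⟩ := k
    exact hPset q hq
  have hd_cont : Continuous d :=
    UniformFun.uniformContinuous_toFun.continuous.comp continuous_subtype_val
  have hd_inj : Function.Injective d := UniformFun.toFun.injective.comp Subtype.val_injective
  let pK (θ : Θ) : K := ⟨UniformFun.ofFun (p θ), Set.mem_image_of_mem _ (hp_mem θ)⟩
  have hlaw : Continuous fun θ => (hd (pK θ)).law :=
    continuous_probabilityMeasure_map hρ_meas hρ_cont fun θ => (hp_dens θ).symm
  have hpK : Continuous pK :=
    (IsContinuousDensity.isClosedEmbedding_law hd hd_cont hd_inj).continuous_iff.2 hlaw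
  exact continuous_subtype_val.comp hpK

/-- continuity of the parametrization.
Let `Ω = (a,b)` be a non-empty bounded open interval, `Θ ⊆ ℝ^m` non-empty and compact,
`(V,𝒱,μ)` a probability space and `ρ : V × Θ → Ω` measurable in its first and continuous in
its second argument.  Let `Pset` be a set of continuous probability densities on `Ω` that is
compact for the sup-norm metric (i.e. compact in the topology of uniform convergence), and
suppose that for every `θ ∈ Θ` the image measure of `μ` under `ρ(·,θ)` has density
`p_θ ∈ Pset` with respect to Lebesgue measure on `Ω`.  Then for every `x ∈ Ω` the map
`θ ↦ p_θ(x)` is continuous on `Θ`. -/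
theorem stmt15_continuity_of_parametrization
    {m : ℕ} (a b : ℝ) (hab : a < b)
    (Θ : Set (EuclideanSpace ℝ (Fin m))) (hΘc : IsCompact Θ) (hΘne : Θ.Nonempty)
    {V : Type*} [MeasurableSpace V] (μ : Measure V) [IsProbabilityMeasure μ]
    (ρ : V → Θ → Set.Ioo a b)
    (hρ_meas : ∀ θ : Θ, Measurable fun v => ρ v θ)
    (hρ_cont : ∀ v, Continuous (ρ v))
    (Pset : Set (Set.Ioo a b → ℝ))
    (hPset_cont : ∀ q ∈ Pset, Continuous q)
    (hPset_nonneg : ∀ q ∈ Pset, ∀ x, 0 ≤ q x)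
    (hPset_dens : ∀ q ∈ Pset,
      ∫⁻ x, ENNReal.ofReal (q x) ∂((volume : Measure ℝ).comap Subtype.val) = 1)
    (hPset_cpt : IsCompact (UniformFun.ofFun '' Pset : Set (UniformFun (Set.Ioo a b) ℝ)))
    (p : Θ → Set.Ioo a b → ℝ) (hp_mem : ∀ θ, p θ ∈ Pset)
    (hp_dens : ∀ θ : Θ, Measure.map (fun v => ρ v θ) μ =
      ((volume : Measure ℝ).comap Subtype.val).withDensity fun x => ENNReal.ofReal (p θ x)) :
    ∀ x : Set.Ioo a b, Continuous fun θ : Θ => p θ x := by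
  have := Measure.IsOpenPosMeasure.comap (volume : Measure ℝ)
    (isOpen_Ioo (a := a) (b := b)).isOpenEmbedding_subtypeVal
  exact fun x => (UniformFun.uniformContinuous_eval ℝ x).continuous.comp <|
    stmt15_continuity_of_parametrization_general _ μ ρ (fun θ => (hρ_meas θ).aemeasurable)
      (fun θ => .of_forall fun v => (hρ_cont v).continuousAt) Pset
      (fun q hq => ⟨hPset_cont q hq, hPset_nonneg q hq, hPset_dens q hq⟩) hPset_cpt p hp_mem hp_dens
end

section
/- Let (Λ,𝒜,ℙ) be a probability space and let L^∞(ℙ) denote the Banach space of (ℙ-equivalence classes of) essentially bounded real-valued measurable functions on Λ with the essential supremum norm. Let 𝒰 = { f ∈ L^∞(ℙ) : there exists c > 0 with f ≥ c ℙ-a.e. }, which is an open subset of L^∞(ℙ), and define L : 𝒰 → ℝ by L(f) = ∫_Λ log f dℙ. Then for every positive integer α, L is α-times Fréchet differentiable on 𝒰, and its α-th Fréchet derivative at f ∈ 𝒰 is the bounded symmetric α-linear map (f₁,…,f_α) ↦ (−1)^{α−1} (α−1)! ∫_Λ f^{−α} f₁ ⋯ f_α dℙ. -/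
open MeasureTheory
open scoped ENNReal

/-!
Under pointwise multiplication `L^∞(μ)` is a commutative Banach algebra in which every function
that is essentially bounded below by a positive constant is invertible. A second-order Taylor
estimate for `log`, uniform in the essential lower bound, shows that the first derivative of `L` at
`f` is the integral composed with multiplication by `f⁻¹`. The analysis ends there: inversion in a
Banach algebra is smooth and `g ↦ g⁻ⁿ` has derivative `k ↦ -n g⁻ⁿ⁻¹ k`, so all higher derivatives
follow by induction.
-/

section BanachAlgebra

open Filter
open scoped Topology ContDiff Nat

variable {𝕜 R F : Type*} [NontriviallyNormedField 𝕜] [NormedCommRing R] [NormedAlgebra 𝕜 R]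
  [HasSummableGeomSeries R] [NormedAddCommGroup F] [NormedSpace 𝕜 F]
  {I : R →L[𝕜] F} {L : R → F} {f : R}

theorem hasFDerivAt_ringInverse_pow_succ (hf : IsUnit f) (n : ℕ) :
    HasFDerivAt (fun g : R => Ring.inverse g ^ (n + 1))
      (-(n + 1 : 𝕜) • ContinuousLinearMap.mul 𝕜 R (Ring.inverse f ^ (n + 2))) f := by
  obtain ⟨u, rfl⟩ := hf
  refine ((hasFDerivAt_ringInverse (𝕜 := 𝕜) u).pow (n + 1)).congr_fderiv ?_
  ext k
  simp only [Ring.inverse_unit, add_tsub_cancel_right, smul_apply, neg_apply,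
    ContinuousLinearMap.mulLeftRight_apply, ContinuousLinearMap.mul_apply', smul_eq_mul,
    nsmul_eq_mul]
  rw [Algebra.smul_def, map_neg, map_add, map_natCast, map_one, Nat.cast_succ]
  ring

theorem hasFDerivAt_clm_ringInverse_pow_succ_mul (I : R →L[𝕜] F) (hf : IsUnit f) (n : ℕ) (w : R) :
    HasFDerivAt (fun g : R => I (Ring.inverse g ^ (n + 1) * w))
      (-(n + 1 : 𝕜) • I ∘L ContinuousLinearMap.mul 𝕜 R (Ring.inverse f ^ (n + 2) * w)) f := by
  refine (I.hasFDerivAt.comp f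
    ((hasFDerivAt_ringInverse_pow_succ (𝕜 := 𝕜) hf n).mul_const w)).congr_fderiv ?_
  ext k
  simp only [ContinuousLinearMap.comp_apply, smul_apply, ContinuousLinearMap.mul_apply',
    smul_eq_mul, mul_smul_comm, map_smul]
  congr 2
  ring

theorem contDiffAt_of_hasFDerivAt_comp_mul_ringInverse (hf : IsUnit f)
    (hL : ∀ᶠ g in 𝓝 f, HasFDerivAt L (I ∘L ContinuousLinearMap.mul 𝕜 R (Ring.inverse g)) g) :
    ContDiffAt 𝕜 ∞ L f := by
  obtain ⟨u, rfl⟩ := hf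
  refine contDiffAt_infty.2 fun n => ContDiffAt.of_le (n := n + 1) ?_ (mod_cast n.le_succ)
  refine contDiffAt_succ_iff_hasFDerivAt.2 ⟨_, ⟨_, hL, fun _ hg => hg⟩, ?_⟩
  exact contDiffAt_const.clm_comp
    ((ContinuousLinearMap.mul 𝕜 R).contDiff.contDiffAt.comp _ (contDiffAt_ringInverse 𝕜 u))

theorem iteratedFDeriv_succ_of_hasFDerivAt_comp_mul_ringInverse (n : ℕ) (hf : IsUnit f)
    (hL : ∀ᶠ g in 𝓝 f, HasFDerivAt L (I ∘L ContinuousLinearMap.mul 𝕜 R (Ring.inverse g)) g)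
    (v : Fin (n + 1) → R) :
    iteratedFDeriv 𝕜 (n + 1) L f v =
      ((-1) ^ n * (n ! : 𝕜)) • I (Ring.inverse f ^ (n + 1) * ∏ i, v i) := by
  induction n generalizing f with
  | zero => simp [hL.self_of_nhds.fderiv]
  | succ n ih =>
    have eventually_eq : (fun g => iteratedFDeriv 𝕜 (n + 1) L g (Fin.tail v)) =ᶠ[𝓝 f]
        fun g => ((-1) ^ n * (n ! : 𝕜)) • I (Ring.inverse g ^ (n + 1) * ∏ i, Fin.tail v i) := by
      filter_upwards [Units.isOpen.mem_nhds hf, hL.eventually_nhds] with g hg hLg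
      exact ih hg hLg _
    have differentiableAt : DifferentiableAt 𝕜 (iteratedFDeriv 𝕜 (n + 1) L) f :=
      (contDiffAt_of_hasFDerivAt_comp_mul_ringInverse hf hL).differentiableAt_iteratedFDeriv
        (mod_cast WithTop.coe_lt_top _)
    have hasFDerivAt_formula :=
      (hasFDerivAt_clm_ringInverse_pow_succ_mul I hf n (∏ i, Fin.tail v i)).const_smul
        ((-1) ^ n * (n ! : 𝕜))
    rw [iteratedFDeriv_succ_apply_left,
      ← fderiv_continuousMultilinear_apply_const_apply differentiableAt,
      (hasFDerivAt_formula.congr_of_eventuallyEq eventually_eq).fderiv, Fin.prod_univ_succ v,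
      mul_comm (v 0), ← mul_assoc, Nat.factorial_succ]
    simp only [smul_apply, ContinuousLinearMap.comp_apply, ContinuousLinearMap.mul_apply',
      smul_smul, Fin.tail]
    congr 1
    push_cast
    ring

end BanachAlgebra

namespace Linfty

section Algebra

variable {Λ E R : Type*} [MeasurableSpace Λ] {μ : Measure Λ}

theorem ae_norm_le_norm [NormedAddCommGroup E] (f : Lp E ∞ μ) : ∀ᵐ x ∂μ, ‖f x‖ ≤ ‖f‖ := by
  simpa only [Lp.norm_def, toReal_eLpNorm (Lp.aestronglyMeasurable f)] using
    ae_le_lpNorm_exponent_top (Lp.memLp f)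

variable [NormedCommRing R]

/-- Pointwise multiplication on `L^∞`, as the Hölder product with exponents `1/∞ + 1/∞ = 1/∞`. -/
noncomputable scoped instance instMul : Mul (Lp R ∞ μ) :=
  ⟨fun f g => f • g⟩

/-- The constant function `1`. -/
noncomputable scoped instance instOne : One (Lp R ∞ μ) :=
  ⟨(memLp_top_const 1).toLp⟩

theorem coeFn_mul (f g : Lp R ∞ μ) : ⇑(f * g) =ᵐ[μ] f * g :=
  Lp.coeFn_lpSMul f g

theorem coeFn_one : ⇑(1 : Lp R ∞ μ) =ᵐ[μ] 1 :=
  (memLp_top_const 1).coeFn_toLp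

/-- `L^∞` as a normed ring; the underlying normed group is Mathlib's. -/
noncomputable scoped instance instNormedCommRing : NormedCommRing (Lp R ∞ μ) where
  __ := (inferInstance : NormedAddCommGroup (Lp R ∞ μ))
  left_distrib := Lp.add_smul
  right_distrib := Lp.smul_add
  zero_mul := Lp.zero_smul R ∞
  mul_zero := Lp.smul_zero R ∞
  mul_assoc f g h := by
    refine Lp.ext ?_
    filter_upwards [coeFn_mul (f * g) h, coeFn_mul f (g * h), coeFn_mul f g, coeFn_mul g h]
      with x hfg_h hf_gh hfg hgh
    simp only [hfg_h, hf_gh, hfg, hgh, Pi.mul_apply, mul_assoc]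
  one_mul f := by
    refine Lp.ext ?_
    filter_upwards [coeFn_mul 1 f, coeFn_one (R := R) (μ := μ)] with x hmul hone
    simp only [hmul, hone, Pi.mul_apply, Pi.one_apply, one_mul]
  mul_one f := by
    refine Lp.ext ?_
    filter_upwards [coeFn_mul f 1, coeFn_one (R := R) (μ := μ)] with x hmul hone
    simp only [hmul, hone, Pi.mul_apply, Pi.one_apply, mul_one]
  mul_comm f g := by
    refine Lp.ext ?_
    filter_upwards [coeFn_mul f g, coeFn_mul g f] with x hfg hgf
    simp only [hfg, hgf, Pi.mul_apply, mul_comm]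
  norm_mul_le := Lp.norm_smul_le

/-- `L^∞` as a normed algebra; the underlying scalar action is Mathlib's. -/
noncomputable scoped instance instNormedAlgebra {𝕜 : Type*} [NormedField 𝕜] [NormedAlgebra 𝕜 R] :
    NormedAlgebra 𝕜 (Lp R ∞ μ) where
  __ := Algebra.ofModule (R := 𝕜) (A := Lp R ∞ μ) Lp.smul_assoc
    fun c f g => (Lp.smul_comm c f g).symm
  norm_smul_le := norm_smul_le

/-- Shortcut to `instNormedCommRing` on the normed group that elaboration attaches to `ℝ`, which
unifies with the one coming from the normed ring `ℝ` only after unfolding. -/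
noncomputable scoped instance instNormedCommRingReal : NormedCommRing (Lp ℝ ∞ μ) :=
  instNormedCommRing

/-- Shortcut to `instNormedAlgebra`, needed for the same reason as `instNormedCommRingReal`. -/
noncomputable scoped instance instNormedAlgebraReal : NormedAlgebra ℝ (Lp ℝ ∞ μ) :=
  instNormedAlgebra

theorem coeFn_prod {ι : Type*} (s : Finset ι) (v : ι → Lp R ∞ μ) :
    ⇑(∏ i ∈ s, v i) =ᵐ[μ] ∏ i ∈ s, ⇑(v i) := by
  classical
  induction s using Finset.induction_on with
  | empty => simpa using coeFn_one
  | insert i s hi ih =>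
    simpa only [Finset.prod_insert hi] using (coeFn_mul _ _).trans ((ae_eq_refl (v i)).mul ih)

theorem coeFn_pow (f : Lp R ∞ μ) (n : ℕ) : ⇑(f ^ n) =ᵐ[μ] ⇑f ^ n := by
  simpa using coeFn_prod (Finset.range n) fun _ => f

theorem coeFn_ringInverse {K : Type*} [NormedField K] {f : Lp K ∞ μ} (hf : IsUnit f) :
    ⇑(Ring.inverse f) =ᵐ[μ] fun x => (f x)⁻¹ := by
  filter_upwards [coeFn_mul (Ring.inverse f) f, coeFn_one (R := K) (μ := μ)] with x hmul hone
  rw [Ring.inverse_mul_cancel f hf, hone] at hmul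
  exact eq_inv_of_mul_eq_one_left hmul.symm

theorem isUnit_of_le_norm {K : Type*} [NormedField K] {f : Lp K ∞ μ} {c : ℝ} (hc : 0 < c)
    (hf : ∀ᵐ x ∂μ, c ≤ ‖f x‖) : IsUnit f := by
  have memLp_inv : MemLp (fun x => (f x)⁻¹) ∞ μ := by
    refine memLp_top_of_bound (Lp.aestronglyMeasurable f).inv₀ c⁻¹ ?_
    filter_upwards [hf] with x hx
    rw [norm_inv]
    exact inv_anti₀ hc hx
  refine IsUnit.of_mul_eq_one memLp_inv.toLp (Lp.ext ?_)
  filter_upwards [hf, memLp_inv.coeFn_toLp, coeFn_mul f memLp_inv.toLp,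
    coeFn_one (R := K) (μ := μ)] with x hx hinv hmul hone
  rw [hmul, hone, Pi.mul_apply, hinv]
  exact mul_inv_cancel₀ (norm_pos_iff.1 (hc.trans_le hx))

end Algebra

section Integral

variable {Λ E : Type*} [MeasurableSpace Λ] (μ : Measure Λ) [IsFiniteMeasure μ]
  [NormedAddCommGroup E] [NormedSpace ℝ E] [CompleteSpace E]

variable (E) in
/-- The integral `f ↦ ∫ f dμ` as a bounded linear map on `L^∞(μ)`, obtained by pairing with
`1 ∈ L¹(μ)`. -/
noncomputable def integralCLM : Lp E ∞ μ →L[ℝ] E :=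
  (ContinuousLinearMap.lsmul ℝ ℝ).lpPairing μ 1 ∞ (Lp.const 1 μ 1)

theorem integralCLM_apply (f : Lp E ∞ μ) :
    integralCLM E μ f = ∫ x, f x ∂μ := by
  rw [integralCLM, ContinuousLinearMap.lpPairing_eq_integral]
  refine integral_congr_ae ?_
  filter_upwards [Lp.coeFn_const 1 μ (1 : ℝ)] with x hx
  rw [hx, Function.const_apply, ContinuousLinearMap.lsmul_apply, one_smul]

end Integral

end Linfty

theorem abs_log_add_sub_log_sub_div_le {a c t : ℝ} (hc : 0 < c) (ha : c ≤ a) (ht : |t| ≤ c / 2) :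
    |Real.log (a + t) - Real.log a - t / a| ≤ 2 / c ^ 2 * t ^ 2 := by
  have a_pos : 0 < a := hc.trans_le ha
  have abs_div_le : |t / a| ≤ 1 / 2 := by
    rw [abs_div, abs_of_pos a_pos, div_le_iff₀ a_pos]
    linarith
  have taylor : |Real.log (1 + t / a) - t / a| ≤ |t / a| ^ 2 / (1 - |t / a|) := by
    have h := Real.abs_log_sub_add_sum_range_le (x := -(t / a)) (by rw [abs_neg]; linarith) 1
    rw [abs_neg] at h
    convert h using 2
    simp only [Finset.range_one, Finset.sum_singleton, zero_add, pow_one, Nat.cast_zero, div_one,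
      sub_neg_eq_add]
    ring
  have one_add_ne_zero : 1 + t / a ≠ 0 := by linarith [neg_abs_le (t / a)]
  calc |Real.log (a + t) - Real.log a - t / a|
      = |Real.log (1 + t / a) - t / a| := by
        rw [show a + t = a * (1 + t / a) by field_simp, Real.log_mul a_pos.ne' one_add_ne_zero,
          add_sub_cancel_left]
    _ ≤ |t / a| ^ 2 / (1 - |t / a|) := taylor
    _ ≤ |t / a| ^ 2 / (1 / 2) := by gcongr; linarith
    _ = 2 / a ^ 2 * t ^ 2 := by rw [sq_abs]; ring
    _ ≤ 2 / c ^ 2 * t ^ 2 := by gcongr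

section ExpectedLogLikelihood

open Linfty
open scoped Topology ContDiff

variable {Λ : Type*} [MeasurableSpace Λ] {μ : Measure Λ}

variable (μ) in
/-- The domain `𝒰 ⊆ L^∞(μ)` of the expected log-likelihood: the functions essentially bounded below
by a positive constant. -/
def uniformlyPositive : Set (Lp ℝ ∞ μ) :=
  {f | ∃ c : ℝ, 0 < c ∧ ∀ᵐ x ∂μ, c ≤ f x}

variable (μ) in
/-- The expected log-likelihood `L(f) = ∫ log f dμ`, extended to all of `L^∞(μ)` by the junk values
of `Real.log` and of the integral. -/
noncomputable def expectedLogLikelihood (f : Lp ℝ ∞ μ) : ℝ :=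
  ∫ x, Real.log (f x) ∂μ

variable {f k : Lp ℝ ∞ μ} {c : ℝ}

theorem ae_sub_norm_le_add (hf : ∀ᵐ x ∂μ, c ≤ f x) (k : Lp ℝ ∞ μ) :
    ∀ᵐ x ∂μ, c - ‖k‖ ≤ (f + k) x := by
  filter_upwards [hf, ae_norm_le_norm k, Lp.coeFn_add f k] with x hx hk hadd
  rw [hadd, Pi.add_apply]
  linarith [neg_le_of_abs_le hk]

theorem add_mem_uniformlyPositive (hf : ∀ᵐ x ∂μ, c ≤ f x) (hk : ‖k‖ < c) :
    f + k ∈ uniformlyPositive μ :=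
  ⟨c - ‖k‖, sub_pos.2 hk, ae_sub_norm_le_add hf k⟩

theorem isOpen_uniformlyPositive : IsOpen (uniformlyPositive μ) := by
  refine Metric.isOpen_iff.2 fun f ⟨c, hc, hf⟩ => ⟨c, hc, fun g hg => ?_⟩
  rw [← add_sub_cancel f g]
  exact add_mem_uniformlyPositive hf (mem_ball_iff_norm.1 hg)

theorem isUnit_of_mem_uniformlyPositive (hf : f ∈ uniformlyPositive μ) : IsUnit f := by
  obtain ⟨c, hc, hcf⟩ := hf
  exact isUnit_of_le_norm hc (hcf.mono fun x hx => hx.trans (le_abs_self _))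

theorem integrable_log [IsFiniteMeasure μ] (hf : f ∈ uniformlyPositive μ) :
    Integrable (fun x => Real.log (f x)) μ := by
  obtain ⟨c, hc, hcf⟩ := hf
  refine Integrable.of_bound
    (Real.measurable_log.comp_aemeasurable
      (Lp.aestronglyMeasurable f).aemeasurable).aestronglyMeasurable (c⁻¹ + ‖f‖) ?_
  filter_upwards [hcf, ae_norm_le_norm f] with x hx hnorm
  have pos : 0 < f x := hc.trans_le hx
  have log_le : Real.log (f x) ≤ ‖f‖ :=
    (Real.log_le_self pos.le).trans ((le_abs_self _).trans hnorm)
  have neg_log_le : -Real.log (f x) ≤ c⁻¹ := by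
    rw [← Real.log_inv]
    exact (Real.log_le_self (inv_pos.2 pos).le).trans (inv_anti₀ hc hx)
  have inv_c_pos : 0 < c⁻¹ := inv_pos.2 hc
  exact abs_le.2 ⟨by linarith [norm_nonneg f], by linarith⟩

theorem abs_expectedLogLikelihood_add_sub_sub_le [IsFiniteMeasure μ] (hc : 0 < c)
    (hf : ∀ᵐ x ∂μ, c ≤ f x) (hk : ‖k‖ ≤ c / 2) :
    |expectedLogLikelihood μ (f + k) - expectedLogLikelihood μ f -
        integralCLM ℝ μ (Ring.inverse f * k)| ≤ 2 / c ^ 2 * ‖k‖ ^ 2 * μ.real Set.univ := by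
  have log_f := integrable_log ⟨c, hc, hf⟩
  have log_add := integrable_log (add_mem_uniformlyPositive hf (by linarith : ‖k‖ < c))
  have inv_mul : Integrable (Ring.inverse f * k : Lp ℝ ∞ μ) μ :=
    (Lp.memLp _).integrable le_top
  rw [integralCLM_apply, expectedLogLikelihood, expectedLogLikelihood, ← integral_sub log_add log_f,
    ← integral_sub (f := fun x => Real.log ((f + k) x) - Real.log (f x)) (log_add.sub log_f)
      inv_mul, ← Real.norm_eq_abs]
  refine norm_integral_le_of_norm_le_const ?_
  filter_upwards [hf, ae_norm_le_norm k, Lp.coeFn_add f k, coeFn_mul (Ring.inverse f) k,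
    coeFn_ringInverse (isUnit_of_mem_uniformlyPositive ⟨c, hc, hf⟩)] with x hx hkx hadd hmul hinv
  simp only [hadd, hmul, hinv, Pi.add_apply, Pi.mul_apply, inv_mul_eq_div]
  calc |Real.log (f x + k x) - Real.log (f x) - k x / f x|
      ≤ 2 / c ^ 2 * k x ^ 2 := abs_log_add_sub_log_sub_div_le hc hx (hkx.trans hk)
    _ = 2 / c ^ 2 * ‖k x‖ ^ 2 := by rw [Real.norm_eq_abs, sq_abs]
    _ ≤ 2 / c ^ 2 * ‖k‖ ^ 2 := by gcongr

theorem hasFDerivAt_expectedLogLikelihood [IsFiniteMeasure μ] (hf : f ∈ uniformlyPositive μ) :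
    HasFDerivAt (expectedLogLikelihood μ)
      (integralCLM ℝ μ ∘L ContinuousLinearMap.mul ℝ (Lp ℝ ∞ μ) (Ring.inverse f)) f := by
  obtain ⟨c, hc, hcf⟩ := hf
  rw [hasFDerivAt_iff_isLittleO_nhds_zero]
  refine Asymptotics.IsBigO.trans_isLittleO (g := fun k : Lp ℝ ∞ μ => ‖k‖ ^ 2) ?_
    (Asymptotics.isLittleO_norm_pow_id one_lt_two)
  refine Asymptotics.IsBigO.of_bound (2 / c ^ 2 * μ.real Set.univ) ?_
  filter_upwards [Metric.closedBall_mem_nhds (0 : Lp ℝ ∞ μ) (half_pos hc)] with k hk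
  rw [norm_pow, norm_norm, mul_right_comm]
  exact abs_expectedLogLikelihood_add_sub_sub_le hc hcf (mem_closedBall_zero_iff.1 hk)

theorem eventually_hasFDerivAt_expectedLogLikelihood [IsFiniteMeasure μ]
    (hf : f ∈ uniformlyPositive μ) : ∀ᶠ g in 𝓝 f, HasFDerivAt (expectedLogLikelihood μ)
      (integralCLM ℝ μ ∘L ContinuousLinearMap.mul ℝ (Lp ℝ ∞ μ) (Ring.inverse g)) g :=
  (isOpen_uniformlyPositive.eventually_mem hf).mono fun _ => hasFDerivAt_expectedLogLikelihood

theorem contDiffAt_expectedLogLikelihood [IsFiniteMeasure μ] (hf : f ∈ uniformlyPositive μ) :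
    ContDiffAt ℝ ∞ (expectedLogLikelihood μ) f :=
  contDiffAt_of_hasFDerivAt_comp_mul_ringInverse (isUnit_of_mem_uniformlyPositive hf)
    (eventually_hasFDerivAt_expectedLogLikelihood hf)

theorem integralCLM_ringInverse_pow_mul_prod [IsFiniteMeasure μ] (hf : IsUnit f) (n : ℕ)
    {ι : Type*} (s : Finset ι) (v : ι → Lp ℝ ∞ μ) :
    integralCLM ℝ μ (Ring.inverse f ^ n * ∏ i ∈ s, v i) =
      ∫ x, (∏ i ∈ s, v i x) / f x ^ n ∂μ := by
  rw [integralCLM_apply]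
  refine integral_congr_ae ?_
  filter_upwards [coeFn_mul (Ring.inverse f ^ n) (∏ i ∈ s, v i), coeFn_prod s v,
    coeFn_pow (Ring.inverse f) n, coeFn_ringInverse hf] with x hmul hprod hpow hinv
  rw [hmul, Pi.mul_apply, hpow, Pi.pow_apply, hinv, hprod, Finset.prod_apply, inv_pow,
    inv_mul_eq_div]

theorem iteratedFDeriv_succ_expectedLogLikelihood [IsFiniteMeasure μ]
    (hf : f ∈ uniformlyPositive μ) (n : ℕ) (v : Fin (n + 1) → Lp ℝ ∞ μ) :
    iteratedFDeriv ℝ (n + 1) (expectedLogLikelihood μ) f v =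
      (-1) ^ n * (n.factorial : ℝ) * ∫ x, (∏ i, v i x) / f x ^ (n + 1) ∂μ := by
  have hunit := isUnit_of_mem_uniformlyPositive hf
  rw [← integralCLM_ringInverse_pow_mul_prod hunit, ← smul_eq_mul]
  exact iteratedFDeriv_succ_of_hasFDerivAt_comp_mul_ringInverse n hunit
    (eventually_hasFDerivAt_expectedLogLikelihood hf) v

end ExpectedLogLikelihood

theorem stmt16_frechet_derivatives_of_L_general
    {Λ : Type*} [MeasurableSpace Λ] (μ : Measure Λ) [IsFiniteMeasure μ] :
    IsOpen (uniformlyPositive μ) ∧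
      ∀ α : ℕ, 0 < α → ∀ f ∈ uniformlyPositive μ,
        ContDiffAt ℝ α (expectedLogLikelihood μ) f ∧
        ∀ v : Fin α → Lp ℝ ∞ μ,
          iteratedFDeriv ℝ α (expectedLogLikelihood μ) f v =
            (-1 : ℝ) ^ (α - 1) * (Nat.factorial (α - 1) : ℝ) *
              ∫ x, (∏ i, v i x) / f x ^ α ∂μ := by
  refine ⟨isOpen_uniformlyPositive, fun α hα f hf => ⟨?_, ?_⟩⟩
  · exact (contDiffAt_expectedLogLikelihood hf).of_le (mod_cast le_top)
  · obtain ⟨n, rfl⟩ := Nat.exists_eq_add_one.2 hα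
    exact iteratedFDeriv_succ_expectedLogLikelihood hf n

/-- Fréchet derivatives of the expected log-likelihood on `L^∞`.
Let `(Λ,𝒜,ℙ)` be a probability space and `𝒰 = {f ∈ L^∞(ℙ) : ∃ c > 0, f ≥ c ℙ-a.e.}`, which
is an open subset of `L^∞(ℙ)`.  Define `L(f) = ∫ log f dℙ` on `L^∞(ℙ)`.  Then for every
positive integer `α`, `L` is `α`-times (continuously) Fréchet differentiable at every point
of `𝒰`, and its `α`-th Fréchet derivative at `f ∈ 𝒰` is the bounded symmetric `α`-linear
map `(f₁,…,f_α) ↦ (−1)^{α−1}(α−1)! ∫ f^{−α} f₁ ⋯ f_α dℙ`. -/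
theorem stmt16_frechet_derivatives_of_L
    {Λ : Type*} [MeasurableSpace Λ] (P : Measure Λ) [IsProbabilityMeasure P] :
    IsOpen {f : Lp ℝ ⊤ P | ∃ c : ℝ, 0 < c ∧ ∀ᵐ x ∂P, c ≤ f x} ∧
      ∀ α : ℕ, 0 < α →
        ∀ f ∈ {f : Lp ℝ ⊤ P | ∃ c : ℝ, 0 < c ∧ ∀ᵐ x ∂P, c ≤ f x},
          ContDiffAt ℝ α (fun g : Lp ℝ ⊤ P => ∫ x, Real.log (g x) ∂P) f ∧
          ∀ v : Fin α → Lp ℝ ⊤ P,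
            (iteratedFDeriv ℝ α (fun g : Lp ℝ ⊤ P => ∫ x, Real.log (g x) ∂P) f) v =
              (-1 : ℝ) ^ (α - 1) * (Nat.factorial (α - 1) : ℝ) *
                ∫ x, (∏ i, v i x) / f x ^ α ∂P :=
  stmt16_frechet_derivatives_of_L_general P
end
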